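/- arXiv:1305.0526 — 12 statements merged into one kernel-verified Lean document; each statement's English description precedes it below -/
import Mathlib

section
/- For every ε, δ ∈ (0,1] there exist a positive integer k with k ≤ C·(log(1/(εδ)) + 1)^3 for an absolute constant C, and positive real numbers w_1,…,w_k and t_1,…,t_k (each at most a polynomial in 1/(δε)), such that for all x ∈ [δ,1]: (1−ε)·x⁻¹ ≤ Σ_{j=1}^k w_j·e^{−t_j·x} ≤ (1+ε)·x⁻¹. -/
open Finset

lemma aux_carath (d : ℕ) (s : Finset ℕ) (hs : s.Nonempty) (f : ℕ → (Fin d → ℝ)) :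
    ∃ (m : ℕ) (w : Fin m → ℝ) (p : Fin m → ℕ), 0 < m ∧ m ≤ d + 1 ∧
      (∀ j, 0 < w j) ∧ (∀ j, p j ∈ s) ∧ ∑ j, w j = (s.card : ℝ) ∧
      ∑ j, w j • f (p j) = ∑ n ∈ s, f n := by
  have hc : (0 : ℝ) < s.card := by exact_mod_cast hs.card_pos
  have hx : (∑ n ∈ s, ((s.card : ℝ)⁻¹) • f n) ∈ convexHull ℝ (f '' (s : Set ℕ)) := by
    apply (convex_convexHull ℝ _).sum_mem
    · intro i _; positivity
    · rw [Finset.sum_const, nsmul_eq_mul]; field_simp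
    · intro i hi
      exact subset_convexHull ℝ _ ⟨i, hi, rfl⟩
  obtain ⟨ι, hι, z, w, hz, hai, hw, hw1, hwz⟩ := eq_pos_convex_span_of_mem_convexHull hx
  have hz' : ∀ i : ι, ∃ n ∈ s, f n = z i := fun i => by
    obtain ⟨n, hn, h⟩ := hz ⟨i, rfl⟩
    exact ⟨n, hn, h⟩
  choose p hp hpz using hz'
  have hcard : Fintype.card ι ≤ d + 1 := by
    have h1 := hai.card_le_finrank_succ
    have h2 := Submodule.finrank_le (vectorSpan ℝ (Set.range z))
    rw [Module.finrank_fin_fun] at h2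
    omega
  let e := Fintype.equivFin ι
  refine ⟨Fintype.card ι, fun j => s.card * w (e.symm j), fun j => p (e.symm j), ?_, hcard, ?_, ?_, ?_, ?_⟩
  · rw [Fintype.card_pos_iff]
    by_contra hne
    rw [not_nonempty_iff] at hne
    simp at hw1
  · intro j; exact mul_pos hc (hw _)
  · intro j; exact hp _
  · rw [← Finset.mul_sum, Equiv.sum_comp e.symm w, hw1, mul_one]
  · rw [Equiv.sum_comp e.symm (fun i => (s.card * w i) • f (p i))]
    simp only [mul_smul, ← Finset.smul_sum, hpz]
    rw [hwz, ← Finset.smul_sum, smul_smul, mul_inv_cancel₀ hc.ne', one_smul]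

lemma aux_geom (h x q : ℝ) (N : ℕ) (hN : 1 ≤ N) (hh : 0 < h) (hx : 0 < x) (hq : q = Real.exp (-(h*x))) :
    x * (h * ∑ n ∈ Ico 1 N, q ^ n) ≤ 1 ∧ q - q ^ N ≤ x * (h * ∑ n ∈ Ico 1 N, q ^ n) := by
  have hq0 : 0 < q := hq ▸ Real.exp_pos _
  have hhx : 0 < h * x := mul_pos hh hx
  have hq1 : q < 1 := by rw [hq, Real.exp_lt_one_iff]; linarith
  have e1 : 1 - q ≤ h * x := by have := Real.add_one_le_exp (-(h*x)); rw [← hq] at this; linarith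
  have e2 : q * (1 + h * x) ≤ 1 := by
    have := Real.add_one_le_exp (h*x)
    calc q * (1 + h*x) ≤ q * Real.exp (h*x) := by gcongr; linarith
      _ = 1 := by rw [hq, ← Real.exp_add]; simp
  have hg : (∑ n ∈ Ico 1 N, q ^ n) * (1 - q) = q - q ^ N := by
    rw [geom_sum_Ico hq1.ne hN]
    have : q - 1 ≠ 0 := by linarith
    field_simp; ring
  have hqN : q ^ N ≤ q := pow_le_of_le_one hq0.le hq1.le (by omega)
  have hqN0 : 0 < q ^ N := pow_pos hq0 N
  set S := ∑ n ∈ Ico 1 N, q ^ n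
  have h1q : 0 < 1 - q := by linarith
  constructor
  · refine le_of_mul_le_mul_right ?_ h1q
    calc x * (h * S) * (1 - q) = (h*x) * (S * (1-q)) := by ring
      _ ≤ 1 * (1 - q) := by rw [hg]; nlinarith
  · refine le_of_mul_le_mul_right ?_ h1q
    calc (q - q^N) * (1 - q) ≤ (q - q^N) * (h * x) := by
          apply mul_le_mul_of_nonneg_left e1; linarith
      _ = x * (h * S) * (1 - q) := by rw [← hg]; ring

lemma aux_dyadic (g : ℕ → ℝ) (M : ℕ) :
    ∑ i ∈ range M, ∑ n ∈ Ico (2^i) (2^(i+1)), g n = ∑ n ∈ Ico 1 (2^M), g n := by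
  induction M with
  | zero => simp
  | succ k ih =>
    rw [sum_range_succ, ih, sum_Ico_consecutive]
    · exact Nat.one_le_two_pow
    · exact Nat.pow_le_pow_right (by norm_num) (by omega)

lemma aux_exp (M : ℕ) (u : ℝ) (hu : 0 ≤ u) (huM : u ≤ 8 * M) :
    |Real.exp (-u) - ∑ k ∈ range (64*M), (-u)^k / k.factorial| ≤ 2 * (1/2)^(64*M) := by
  have h1 := Complex.exp_bound' (x := ((-u : ℝ) : ℂ)) (n := 64*M) (by
    rw [Complex.norm_real, Real.norm_eq_abs, abs_neg, abs_of_nonneg hu, div_le_iff₀ (by positivity)]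
    push_cast
    have : (0:ℝ) ≤ M := by positivity
    linarith)
  rw [Complex.norm_real, Real.norm_eq_abs, abs_neg, abs_of_nonneg hu] at h1
  have h2 : Complex.exp ((-u : ℝ) : ℂ) - ∑ m ∈ range (64*M), ((-u : ℝ) : ℂ) ^ m / m.factorial
      = ((Real.exp (-u) - ∑ k ∈ range (64*M), (-u)^k / k.factorial : ℝ) : ℂ) := by
    push_cast; rfl
  rw [h2, Complex.norm_real, Real.norm_eq_abs] at h1
  refine h1.trans ?_
  have h3 := Real.pow_div_factorial_le_exp (8*u) (by positivity) (64*M)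
  have h4 : Real.exp (8*u) ≤ 4 ^ (64*M) := by
    calc Real.exp (8*u) ≤ Real.exp ((64*M : ℕ) * 1) := by
          apply Real.exp_le_exp.2; push_cast; linarith
      _ = Real.exp 1 ^ (64*M) := Real.exp_nat_mul 1 _
      _ ≤ 4 ^ (64*M) := by
          gcongr; have := Real.exp_one_lt_d9; linarith
  have h5 : u ^ (64*M) / (64*M).factorial = (8*u)^(64*M) / (64*M).factorial * (1/8)^(64*M) := by
    rw [mul_pow, div_mul_eq_mul_div, mul_right_comm, ← mul_pow]; norm_num
  rw [h5, mul_comm]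
  gcongr
  calc (8*u)^(64*M) / (64*M).factorial * (1/8)^(64*M) ≤ 4^(64*M) * (1/8)^(64*M) := by
        gcongr; exact h3.trans h4
    _ = (1/2)^(64*M) := by rw [← mul_pow]; norm_num

lemma aux_num (M : ℕ) : (16 * M : ℝ) * (1/2)^(64*M) ≤ 2 * Real.exp (-(2*M)) := by
  rcases Nat.eq_zero_or_pos M with rfl | hM
  · simp
  have h1 : (1/2:ℝ)^(4*M) ≤ Real.exp (-(2*M)) := by
    have : Real.exp (-(2*M)) = Real.exp (-1) ^ (2*M) := by
      rw [← Real.exp_nat_mul]; push_cast; ring_nf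
    rw [this, show 4*M = 2*(2*M) by ring, pow_mul]
    gcongr
    rw [Real.exp_neg]
    have := Real.exp_one_lt_d9
    rw [show ((1/2:ℝ)^2) = (4:ℝ)⁻¹ by norm_num]
    gcongr; linarith
  have h2 : (8 * M : ℝ) * (1/2)^(60*M) ≤ 1 := by
    have a : M < 2^M := Nat.lt_two_pow_self
    have a' : (M:ℝ) ≤ 2^M := by exact_mod_cast a.le
    have b : (8:ℝ) ≤ 2^(59*M) := by
      calc (8:ℝ) = 2^3 := by norm_num
        _ ≤ 2^(59*M) := pow_le_pow_right₀ (by norm_num) (by omega)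
    calc (8 * M : ℝ) * (1/2)^(60*M) ≤ (2^(59*M) * 2^M) * (1/2)^(60*M) := by gcongr
      _ = 1 := by rw [← pow_add, show 59*M+M = 60*M by ring, ← mul_pow]; norm_num
  calc (16 * M : ℝ) * (1/2)^(64*M) = 2 * ((8 * M : ℝ) * (1/2)^(60*M)) * (1/2)^(4*M) := by
        rw [show 64*M = 60*M+4*M by ring, pow_add]; ring
    _ ≤ 2 * 1 * Real.exp (-(2*M)) := by gcongr
    _ = _ := by ring

lemma aux_block (M i : ℕ) (h : ℝ) (hh : 0 < h) :
    ∃ (m : ℕ) (w t : Fin m → ℝ), 0 < m ∧ m ≤ 64 * M + 1 ∧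
      (∀ j, 0 < w j ∧ 0 < t j ∧ w j ≤ h * 2^i ∧ t j ≤ h * 2^(i+1)) ∧
      ∀ x : ℝ, 0 < x →
        |∑ j, w j * Real.exp (-(t j) * x) - h * ∑ n ∈ Ico (2^i) (2^(i+1)), Real.exp (-(h*x))^n|
          ≤ 2 * Real.exp (-(2*M)) * x⁻¹ := by
  set s : Finset ℕ := Ico (2^i) (2^(i+1)) with hs
  have hcard : s.card = 2^i := by rw [hs, Nat.card_Ico, pow_succ]; omega
  have hne : s.Nonempty := by rw [← Finset.card_pos, hcard]; positivity
  obtain ⟨m, w, p, hm0, hm, hw, hp, hw1, hwf⟩ :=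
    aux_carath (64*M) s hne (fun n k => (n:ℝ)^(k:ℕ))
  rw [hcard] at hw1
  push_cast at hw1
  have hsn : ∀ n ∈ s, (2:ℝ)^i ≤ n ∧ (n:ℝ) ≤ 2^(i+1) := by
    intro n hn
    rw [hs, Finset.mem_Ico] at hn
    exact ⟨by exact_mod_cast hn.1, by exact_mod_cast hn.2.le⟩
  have hmom : ∀ k < 64*M, ∑ j, w j * (p j : ℝ)^k = ∑ n ∈ s, (n:ℝ)^k := by
    intro k hk
    have := congrFun hwf ⟨k, hk⟩
    simpa [Finset.sum_apply] using this
  refine ⟨m, fun j => h * w j, fun j => h * p j, hm0, hm, ?_, ?_⟩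
  · intro j
    have h1 := hsn _ (hp j)
    have h2 : (0:ℝ) < 2^i := by positivity
    refine ⟨mul_pos hh (hw j), mul_pos hh (by linarith), ?_, ?_⟩
    · apply mul_le_mul_of_nonneg_left _ hh.le
      rw [← hw1]
      exact Finset.single_le_sum (f := w) (fun j _ => (hw j).le) (Finset.mem_univ j)
    · exact mul_le_mul_of_nonneg_left h1.2 hh.le
  · intro x hx
    set g : ℕ → ℝ := fun n => Real.exp (-(n * (h * x))) with hg
    have e1 : ∑ j, h * w j * Real.exp (-(h * p j) * x) = h * ∑ j, w j * g (p j) := by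
      rw [Finset.mul_sum]
      refine Finset.sum_congr rfl fun j _ => ?_
      rw [hg]; simp only; rw [mul_assoc]; congr 3; ring
    have e2 : ∀ n : ℕ, Real.exp (-(h*x))^n = g n := by
      intro n; rw [← Real.exp_nat_mul, hg]; simp only; congr 1; ring
    rw [e1]
    simp only [e2]
    rw [← mul_sub, abs_mul, abs_of_pos hh]
    set a := h * 2^i with ha
    have ha0 : 0 < a := by positivity
    have hsum1 : ∑ n ∈ s, (1:ℝ) = 2^i := by simp [hcard]
    rcases le_total (4 * M : ℝ) (a * x) with hc | hc
    · have gb : ∀ n ∈ s, g n ≤ Real.exp (-(a*x)) := by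
        intro n hn
        apply Real.exp_le_exp.2
        have : (2:ℝ)^i * (h*x) ≤ n * (h * x) := by gcongr; exact (hsn n hn).1
        rw [ha]; nlinarith
      have b1 : ∑ j, w j * g (p j) ≤ 2^i * Real.exp (-(a*x)) := by
        rw [← hw1, Finset.sum_mul]
        exact Finset.sum_le_sum fun j _ => mul_le_mul_of_nonneg_left (gb _ (hp j)) (hw j).le
      have b2 : ∑ n ∈ s, g n ≤ 2^i * Real.exp (-(a*x)) := by
        rw [← hsum1, Finset.sum_mul]
        exact Finset.sum_le_sum fun n hn => by rw [one_mul]; exact gb n hn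
      have b3 : 0 ≤ ∑ j, w j * g (p j) :=
        Finset.sum_nonneg fun j _ => mul_nonneg (hw j).le (Real.exp_pos _).le
      have b4 : 0 ≤ ∑ n ∈ s, g n := Finset.sum_nonneg fun j _ => (Real.exp_pos _).le
      have b5 : |∑ j, w j * g (p j) - ∑ n ∈ s, g n| ≤ 2^i * Real.exp (-(a*x)) := by
        rw [abs_le]; constructor <;> linarith
      have b6 : a * x ≤ 2 * Real.exp (a*x/2) := by
        have := Real.add_one_le_exp (a*x/2); linarith
      rw [← div_eq_mul_inv, le_div_iff₀ hx]
      calc h * |∑ j, w j * g (p j) - ∑ n ∈ s, g n| * x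
          ≤ h * (2^i * Real.exp (-(a*x))) * x := by gcongr
        _ = (a * x) * Real.exp (-(a*x)) := by rw [ha]; ring
        _ ≤ (2 * Real.exp (a*x/2)) * Real.exp (-(a*x)) := by gcongr
        _ = 2 * Real.exp (-(a*x/2)) := by rw [mul_assoc, ← Real.exp_add]; ring_nf
        _ ≤ 2 * Real.exp (-(2*M)) := by gcongr; linarith
    · set P : ℕ → ℝ := fun n => ∑ k ∈ range (64*M), (-(n * (h * x)))^k / k.factorial with hP
      have hPe : ∑ j, w j * P (p j) = ∑ n ∈ s, P n := by
        simp only [hP, Finset.mul_sum]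
        rw [Finset.sum_comm, Finset.sum_comm (s := s)]
        refine Finset.sum_congr rfl fun k hk => ?_
        have := hmom k (Finset.mem_range.1 hk)
        calc ∑ j, w j * ((-(p j * (h * x)))^k / k.factorial)
            = (∑ j, w j * (p j : ℝ)^k) * ((-(h*x))^k / k.factorial) := by
              rw [Finset.sum_mul]
              refine Finset.sum_congr rfl fun j _ => ?_
              rw [← mul_neg, mul_pow]; ring
          _ = _ := by
              rw [this, Finset.sum_mul]
              refine Finset.sum_congr rfl fun j _ => ?_
              rw [← mul_neg (j:ℝ), mul_pow]; ring
      set E : ℝ := 2 * (1/2)^(64*M) with hE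
      have hb : ∀ n ∈ s, |g n - P n| ≤ E := by
        intro n hn
        apply aux_exp M
        · positivity
        · calc (n:ℝ) * (h * x) ≤ 2^(i+1) * (h * x) := by gcongr; exact (hsn n hn).2
            _ = 2 * (a * x) := by rw [ha, pow_succ]; ring
            _ ≤ 8 * M := by linarith
      have b1 : |∑ j, w j * g (p j) - ∑ j, w j * P (p j)| ≤ 2^i * E := by
        rw [← Finset.sum_sub_distrib, ← hw1, Finset.sum_mul]
        refine (Finset.abs_sum_le_sum_abs _ _).trans (Finset.sum_le_sum fun j _ => ?_)
        rw [← mul_sub, abs_mul, abs_of_pos (hw j)]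
        exact mul_le_mul_of_nonneg_left (hb _ (hp j)) (hw j).le
      have b2 : |∑ n ∈ s, g n - ∑ n ∈ s, P n| ≤ 2^i * E := by
        rw [← Finset.sum_sub_distrib, ← hsum1, Finset.sum_mul]
        refine (Finset.abs_sum_le_sum_abs _ _).trans (Finset.sum_le_sum fun j hj => ?_)
        rw [one_mul]; exact hb j hj
      have b5 : |∑ j, w j * g (p j) - ∑ n ∈ s, g n| ≤ 2 * (2^i * E) := by
        rw [hPe] at b1
        rw [abs_le] at *
        constructor <;> linarith [b1.1, b1.2, b2.1, b2.2]
      rw [← div_eq_mul_inv, le_div_iff₀ hx]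
      calc h * |∑ j, w j * g (p j) - ∑ n ∈ s, g n| * x
          ≤ h * (2 * (2^i * E)) * x := by gcongr
        _ = (a * x) * (2 * E) := by rw [ha]; ring
        _ ≤ (4 * M) * (2 * E) := by gcongr
        _ = (16 * M : ℝ) * (1/2)^(64*M) := by rw [hE]; ring
        _ ≤ _ := aux_num M

/-- **Lemma 2 (scalar approximation of `x⁻¹` by a sparse sum of exponentials).**
For every `ε, δ ∈ (0,1]` there exist a positive integer `k` with
`k ≤ C * (log (1/(ε*δ)) + 1)^3` for an absolute constant `C`, and positive reals
`w j, t j` each bounded by a polynomial in `1/(δ*ε)` (formalized as `C * (1/(δ*ε))^C`),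
such that for all `x ∈ [δ,1]`,
`(1-ε) * x⁻¹ ≤ ∑ j, w j * exp (-(t j) * x) ≤ (1+ε) * x⁻¹`. -/
theorem inverse_approx_by_exponentials_scalar :
    ∃ C : ℝ, 0 < C ∧
      ∀ ε δ : ℝ, ε ∈ Set.Ioc (0 : ℝ) 1 → δ ∈ Set.Ioc (0 : ℝ) 1 →
        ∃ (k : ℕ) (w t : Fin k → ℝ),
          0 < k ∧
          (k : ℝ) ≤ C * (Real.log (1 / (ε * δ)) + 1) ^ 3 ∧
          (∀ j, 0 < w j ∧ 0 < t j ∧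
            w j ≤ C * (1 / (δ * ε)) ^ C ∧ t j ≤ C * (1 / (δ * ε)) ^ C) ∧
          ∀ x ∈ Set.Icc δ 1,
            (1 - ε) * x⁻¹ ≤ ∑ j, w j * Real.exp (-(t j) * x) ∧
            ∑ j, w j * Real.exp (-(t j) * x) ≤ (1 + ε) * x⁻¹ := by
  refine ⟨3000, by norm_num, ?_⟩
  rintro ε δ ⟨hε0, hε1⟩ ⟨hδ0, hδ1⟩
  have hX0 : 0 < ε^2 * δ := by positivity
  have hε2 : ε^2 ≤ ε := by nlinarith
  have hX1 : ε^2 * δ ≤ 1 := by nlinarith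
  obtain ⟨m0, hm1, hm2⟩ := exists_nat_pow_near (x := 32 / (ε^2 * δ)) (y := (2:ℝ))
    (by rw [le_div_iff₀ hX0]; linarith) (by norm_num)
  set M := m0 + 1 with hM
  set l := Real.log (1 / (ε * δ)) with hl
  have hεδ0 : 0 < ε * δ := by positivity
  have hεδ : ε * δ ≤ 1 := by nlinarith
  have hy1 : 1 ≤ 1 / (ε * δ) := by rw [le_div_iff₀ hεδ0]; linarith
  have hl0 : 0 ≤ l := Real.log_nonneg hy1
  have hXy : 32 / (ε^2 * δ) ≤ 32 * (1 / (ε*δ))^2 := by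
    have : 32 * (1 / (ε*δ))^2 = 32 / (ε^2 * δ^2) := by field_simp
    rw [this]
    have : δ^2 ≤ δ := by nlinarith
    gcongr
  have hpowM : (2:ℝ)^M ≤ 64 * (1 / (ε*δ))^2 := by rw [hM, pow_succ]; linarith
  have hMl : (M:ℝ) ≤ 6 * (l + 1) := by
    have h1 : (m0:ℝ) * Real.log 2 ≤ 5 * Real.log 2 + 2 * l := by
      have := Real.log_le_log (by positivity) (hm1.trans hXy)
      rw [Real.log_pow, Real.log_mul (by norm_num) (by positivity), Real.log_pow,
        show (32:ℝ) = 2^5 by norm_num, Real.log_pow] at this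
      push_cast at this
      exact this
    have h2 := Real.log_two_gt_d9
    have h3 : ((m0:ℝ) - 5) * Real.log 2 ≤ 2 * l := by linarith
    have h4 : (m0:ℝ) - 5 ≤ 6 * l := by
      by_contra hcon
      push Not at hcon
      nlinarith
    rw [hM]; push_cast; linarith
  have hh : 0 < ε / 4 := by positivity
  set h := ε / 4 with hhdef
  choose m w t hm0 hmM hwt happ using fun i : Fin M => aux_block M i h hh
  let e := Fintype.equivFin (Σ i : Fin M, Fin (m i))
  have hMpos : 0 < M := by omega
  have hbig : h * 2^M ≤ 3000 * (1 / (δ * ε))^(3000:ℝ) := by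
    rw [mul_comm δ ε]
    have : (1 / (ε*δ))^2 ≤ (1 / (ε * δ))^(3000:ℝ) := by
      rw [← Real.rpow_natCast]
      exact Real.rpow_le_rpow_of_exponent_le hy1 (by norm_num)
    have h0 : 0 ≤ (1 / (ε*δ))^2 := by positivity
    calc h * 2^M ≤ 1 * (64 * (1 / (ε*δ))^2) := by
          gcongr; linarith
      _ ≤ _ := by linarith
  refine ⟨Fintype.card (Σ i : Fin M, Fin (m i)), fun j => w (e.symm j).1 (e.symm j).2,
    fun j => t (e.symm j).1 (e.symm j).2, ?_, ?_, ?_, ?_⟩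
  · rw [Fintype.card_pos_iff]
    exact ⟨⟨⟨0, hMpos⟩, ⟨0, hm0 _⟩⟩⟩
  · have h1 : Fintype.card (Σ i : Fin M, Fin (m i)) ≤ M * (64*M+1) := by
      simp only [Fintype.card_sigma, Fintype.card_fin]
      calc ∑ i, m i ≤ ∑ i : Fin M, (64*M+1) := Finset.sum_le_sum fun i _ => hmM i
        _ = _ := by simp
    have h1' : (Fintype.card (Σ i : Fin M, Fin (m i)) : ℝ) ≤ M * (64*M+1) := by exact_mod_cast h1
    have h2 : (1:ℝ) ≤ M := by exact_mod_cast hMpos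
    calc (Fintype.card (Σ i : Fin M, Fin (m i)) : ℝ) ≤ M * (64*M+1) := h1'
      _ ≤ 65 * (M:ℝ)^2 := by nlinarith
      _ ≤ 65 * (6 * (l+1))^2 := by gcongr
      _ ≤ 3000 * (l+1)^2 := by nlinarith [sq_nonneg (l+1)]
      _ ≤ 3000 * (l+1)^3 := by
          gcongr
          · linarith
          · norm_num
  · intro j
    obtain ⟨a1, a2, a3, a4⟩ := hwt (e.symm j).1 (e.symm j).2
    have hi : ((e.symm j).1 : ℕ) + 1 ≤ M := (e.symm j).1.2
    refine ⟨a1, a2, (a3.trans ?_).trans hbig, (a4.trans ?_).trans hbig⟩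
    · gcongr
      · norm_num
      · omega
    · gcongr
      norm_num
  · rintro x ⟨hx1, hx2⟩
    have hx0 : 0 < x := hδ0.trans_le hx1
    have es : ∑ j, w (e.symm j).1 (e.symm j).2 * Real.exp (-(t (e.symm j).1 (e.symm j).2) * x)
        = ∑ i : Fin M, ∑ j, w i j * Real.exp (-(t i j) * x) := by
      rw [Equiv.sum_comp e.symm (fun z => w z.1 z.2 * Real.exp (-(t z.1 z.2) * x)),
        Fintype.sum_sigma]
    rw [es]
    set q := Real.exp (-(h*x)) with hq
    obtain ⟨g1, g2⟩ := aux_geom h x q (2^M) Nat.one_le_two_pow hh hx0 hq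
    set T := h * ∑ n ∈ Ico 1 (2^M), q ^ n with hT
    have hTs : T = ∑ i : Fin M, h * ∑ n ∈ Ico (2^(i:ℕ)) (2^((i:ℕ)+1)), q^n := by
      rw [hT, ← aux_dyadic, ← Finset.mul_sum, Finset.sum_range]
    have herr : |∑ i : Fin M, ∑ j, w i j * Real.exp (-(t i j) * x) - T| ≤ ε / 4 * x⁻¹ := by
      rw [hTs, ← Finset.sum_sub_distrib]
      refine (Finset.abs_sum_le_sum_abs _ _).trans ?_
      refine (Finset.sum_le_sum fun i _ => happ i x hx0).trans ?_
      rw [Finset.sum_const, Finset.card_univ, Fintype.card_fin, nsmul_eq_mul, ← mul_assoc]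
      gcongr
      have c1 : (M:ℝ) ≤ Real.exp M := by have := Real.add_one_le_exp (M:ℝ); linarith
      have c2 : (2:ℝ)^M ≤ Real.exp M := by
        have := Real.exp_nat_mul 1 M
        rw [mul_one] at this
        rw [this]
        gcongr
        have := Real.exp_one_gt_d9; linarith
      have c3 : 32 / ε ≤ Real.exp M := by
        refine le_trans ?_ (hm2.le.trans c2)
        gcongr
        nlinarith
      calc (M:ℝ) * (2 * Real.exp (-(2*M))) ≤ Real.exp M * (2 * Real.exp (-(2*M))) := by gcongr
        _ = 2 * (Real.exp M)⁻¹ := by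
            rw [← Real.exp_neg, mul_left_comm, ← Real.exp_add]; ring_nf
        _ ≤ 2 * (32 / ε)⁻¹ := by gcongr
        _ ≤ ε / 4 := by rw [inv_div]; linarith
    have hqN : q ^ (2^M) ≤ ε / 4 := by
      have d1 : 4 / ε ≤ 2^M * (h * x) := by
        calc 4 / ε ≤ (32 / (ε^2*δ)) * (ε / 4 * δ) := by
              have : (32 / (ε^2*δ)) * (ε / 4 * δ) = 8 / ε := by field_simp; norm_num
              rw [this]; gcongr; norm_num
          _ ≤ 2^M * (h * x) := by gcongr
      rw [hq, ← Real.exp_nat_mul]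
      have d2 : Real.exp (((2^M : ℕ):ℝ) * -(h*x)) ≤ (4/ε)⁻¹ := by
        rw [mul_neg, Real.exp_neg]
        gcongr
        push_cast
        have := Real.add_one_le_exp ((2:ℝ)^M * (h*x)); linarith
      rwa [inv_div] at d2
    have hq1 : 1 - ε / 4 ≤ q := by
      have := Real.add_one_le_exp (-(h*x))
      rw [← hq] at this
      have : h * x ≤ h := by nlinarith
      linarith
    have hT1 : T ≤ 1 * x⁻¹ := by
      rw [← div_eq_mul_inv, le_div_iff₀ hx0]; linarith
    have hT2 : (1 - ε/2) * x⁻¹ ≤ T := by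
      rw [← div_eq_mul_inv, div_le_iff₀ hx0]; linarith
    have hxi : 0 < ε * x⁻¹ := by positivity
    rw [abs_le] at herr
    obtain ⟨r1, r2⟩ := herr
    clear_value T
    generalize (∑ i : Fin M, ∑ j, w i j * Real.exp (-(t i j) * x)) = Q at *
    constructor
    · linarith
    · linarith
end

section
/- For every x > 0 and every non-negative integer k, the k-th derivative of f_x satisfies f_x^{(k)}(s) = f_x(s)·Σ_{j=0}^k c_{k,j}·(−x·e^s)^j for all real s, where the c_{k,j} are non-negative integers (independent of x and s) satisfying Σ_{j=0}^k c_{k,j} ≤ (k+1)^{k+1}. -/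
def fxC : ℕ → ℕ → ℕ
  | 0, 0 => 1
  | 0, _ + 1 => 0
  | k + 1, 0 => fxC k 0
  | k + 1, j + 1 => (j + 2) * fxC k (j + 1) + fxC k j

theorem fxC_zero (k : ℕ) : ∀ j, k < j → fxC k j = 0 := by
  induction k with
  | zero => intro j hj; cases j with
    | zero => omega
    | succ j => rfl
  | succ k ih => intro j hj; cases j with
    | zero => omega
    | succ j => simp [fxC, ih j (by omega), ih (j+1) (by omega)]

theorem fxC_sum {R : Type*} [CommSemiring R] (k : ℕ) (w : ℕ → R) :
    ∑ j ∈ Finset.range (k + 2), (fxC (k + 1) j : R) * w j =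
      ∑ j ∈ Finset.range (k + 1), (fxC k j : R) * (((j : R) + 1) * w j + w (j + 1)) := by
  have h : ∑ j ∈ Finset.range (k + 2), (fxC k j : R) * (((j : R) + 1) * w j) =
      ∑ j ∈ Finset.range (k + 1), (fxC k j : R) * (((j : R) + 1) * w j) := by
    rw [Finset.sum_range_succ, fxC_zero k (k+1) (by omega)]; simp
  simp only [mul_add (fxC k _ : R), Finset.sum_add_distrib]
  rw [← h, Finset.sum_range_succ', Finset.sum_range_succ' _ (k+1), add_right_comm,
    ← Finset.sum_add_distrib]
  congr 1
  · refine Finset.sum_congr rfl fun j _ => ?_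
    simp only [fxC]; push_cast; ring
  · simp [fxC]

theorem fxC_le (k : ℕ) : ∑ j ∈ Finset.range (k + 1), fxC k j ≤ (k + 1) ^ (k + 1) := by
  induction k with
  | zero => simp [fxC]
  | succ k ih =>
    have h := fxC_sum (R := ℕ) k (fun _ => 1)
    simp only [mul_one, Nat.cast_id] at h
    rw [h]
    calc _ ≤ ∑ j ∈ Finset.range (k + 1), fxC k j * (k + 2) := by
          refine Finset.sum_le_sum fun j hj => ?_
          have := Finset.mem_range.1 hj
          exact Nat.mul_le_mul_left _ (by omega)
      _ = (∑ j ∈ Finset.range (k + 1), fxC k j) * (k + 2) := by rw [Finset.sum_mul]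
      _ ≤ (k + 2) ^ (k + 1) * (k + 2) :=
          Nat.mul_le_mul_right _ (ih.trans (Nat.pow_le_pow_left (by omega) _))
      _ = _ := by ring


/-- **Fact 1 (structure of the derivatives of `fₓ`).**
For `fₓ(s) = exp (-x * exp s + s)`, the `k`-th derivative satisfies
`fₓ⁽ᵏ⁾(s) = fₓ(s) * ∑_{j=0}^k c j * (-x * exp s)^j`, where the `c j` are non-negative
integers, independent of `x` and `s`, with `∑_{j=0}^k c j ≤ (k+1)^(k+1)`. -/
theorem iteratedDeriv_fx_eq (k : ℕ) :
    ∃ c : ℕ → ℕ,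
      (∑ j ∈ Finset.range (k + 1), c j ≤ (k + 1) ^ (k + 1)) ∧
      ∀ x : ℝ, 0 < x → ∀ s : ℝ,
        iteratedDeriv k (fun s : ℝ => Real.exp (-x * Real.exp s + s)) s =
          Real.exp (-x * Real.exp s + s) *
            ∑ j ∈ Finset.range (k + 1), (c j : ℝ) * (-x * Real.exp s) ^ j := by
  refine ⟨fxC k, fxC_le k, fun x _ => ?_⟩
  induction k with
  | zero => intro s; simp [fxC]
  | succ k ih =>
    intro s
    rw [iteratedDeriv_succ, funext ih, fxC_sum k]
    have hy : HasDerivAt (fun s : ℝ => -x * Real.exp s) (-x * Real.exp s) s :=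
      (Real.hasDerivAt_exp s).const_mul (-x)
    have hf := (hy.add (hasDerivAt_id' s)).exp
    have hS := HasDerivAt.fun_sum (u := Finset.range (k + 1))
      (fun j _ => (hy.fun_pow j).const_mul (fxC k j : ℝ))
    refine ((hf.mul hS).deriv).trans ?_
    simp only [Pi.add_apply]
    rw [mul_assoc, ← mul_add, Finset.mul_sum, ← Finset.sum_add_distrib]
    congr 1
    refine Finset.sum_congr rfl fun j _ => ?_
    cases j with
    | zero => simp; ring
    | succ j => simp only [Nat.add_sub_cancel]; push_cast; ring
end

section
/- For every x > 0, every real s, and every non-negative integer k, |f_x^{(k)}(s)| ≤ f_x(s)·(k+1)^{k+1}·max{1, (x·e^s)^k}. -/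
lemma fx_aux_contDiff (x : ℝ) (j k : ℕ) : ContDiff ℝ k
    (fun s : ℝ => Real.exp (-x * Real.exp s + s) * (x * Real.exp s) ^ j) := by
  fun_prop

lemma fx_aux_deriv (x : ℝ) (j : ℕ) :
    deriv (fun s : ℝ => Real.exp (-x * Real.exp s + s) * (x * Real.exp s) ^ j) =
    (fun s : ℝ => ((j : ℝ) + 1) * (Real.exp (-x * Real.exp s + s) * (x * Real.exp s) ^ j)) -
      (fun s : ℝ => Real.exp (-x * Real.exp s + s) * (x * Real.exp s) ^ (j + 1)) := by
  funext s
  have h1 : HasDerivAt (fun s : ℝ => Real.exp (-x * Real.exp s + s))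
      (Real.exp (-x * Real.exp s + s) * (-x * Real.exp s + 1)) s :=
    (((Real.hasDerivAt_exp s).const_mul (-x)).add (hasDerivAt_id s)).exp
  have h2 : HasDerivAt (fun s : ℝ => (x * Real.exp s) ^ j)
      ((j : ℝ) * (x * Real.exp s) ^ (j - 1) * (x * Real.exp s)) s :=
    ((Real.hasDerivAt_exp s).const_mul x).pow j
  have h3 : (j : ℝ) * (x * Real.exp s) ^ (j - 1) * (x * Real.exp s)
      = j * (x * Real.exp s) ^ j := by
    cases j with
    | zero => simp
    | succ n => simp only [Nat.add_sub_cancel, pow_succ]; ring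
  rw [h3] at h2
  refine (h1.mul h2).deriv.trans ?_
  simp only [Pi.sub_apply]
  ring

lemma fx_aux_bound (x : ℝ) (hx : 0 < x) (s M : ℝ) (k : ℕ) : ∀ j : ℕ,
    (∀ i ≤ j + k, (x * Real.exp s) ^ i ≤ M) →
    |iteratedDeriv k (fun s : ℝ => Real.exp (-x * Real.exp s + s) * (x * Real.exp s) ^ j) s| ≤
      Real.exp (-x * Real.exp s + s) * ((j : ℝ) + k + 1) ^ k * M := by
  induction k with
  | zero =>
    intro j h
    have hy : 0 < x * Real.exp s := by positivity
    rw [iteratedDeriv_zero, abs_of_pos (by positivity)]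
    rw [pow_zero, mul_one]
    exact mul_le_mul_of_nonneg_left (h j (by simp)) (Real.exp_pos _).le
  | succ k ih =>
    intro j h
    have hM : 0 ≤ M := le_trans (by simp) (h 0 (by omega))
    have e1 := ih j (fun i hi => h i (by omega))
    have e2 := ih (j + 1) (fun i hi => h i (by omega))
    have hc := fx_aux_contDiff x j k
    rw [iteratedDeriv_succ', fx_aux_deriv, iteratedDeriv_sub
      (contDiff_const.mul hc).contDiffAt (fx_aux_contDiff x (j + 1) k).contDiffAt,
      iteratedDeriv_const_mul_field]
    refine (abs_sub _ _).trans ?_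
    rw [abs_mul, abs_of_nonneg (by positivity : (0 : ℝ) ≤ (j : ℝ) + 1)]
    have hF : 0 ≤ Real.exp (-x * Real.exp s + s) * M := by positivity
    push_cast at e2 ⊢
    have hp : ((j : ℝ) + k + 1) ^ k ≤ ((j : ℝ) + (k + 1) + 1) ^ k := by
      gcongr; linarith
    have hq : ((j : ℝ) + 1 + k + 1) ^ k = ((j : ℝ) + (k + 1) + 1) ^ k := by
      congr 1; ring
    rw [hq] at e2
    have hP : 0 ≤ ((j : ℝ) + (k + 1) + 1) ^ k := by positivity
    have hk : (0 : ℝ) ≤ k := by positivity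
    have hj : (0 : ℝ) ≤ (j : ℝ) + 1 := by positivity
    have key : ((j : ℝ) + 1) * ((j : ℝ) + k + 1) ^ k + ((j : ℝ) + (k + 1) + 1) ^ k ≤
        ((j : ℝ) + (k + 1) + 1) ^ (k + 1) := by
      rw [pow_succ]
      nlinarith [mul_le_mul_of_nonneg_left hp hj, mul_nonneg hP hk]
    have := mul_le_mul_of_nonneg_left key hF
    have := mul_le_mul_of_nonneg_left e1 hj
    linarith

/-- **Pointwise derivative bound.** For `fₓ(s) = exp (-x * exp s + s)`,
`|fₓ⁽ᵏ⁾(s)| ≤ fₓ(s) * (k+1)^(k+1) * max 1 ((x * exp s)^k)`. -/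
theorem abs_iteratedDeriv_fx_le (x : ℝ) (hx : 0 < x) (s : ℝ) (k : ℕ) :
    |iteratedDeriv k (fun s : ℝ => Real.exp (-x * Real.exp s + s)) s| ≤
      Real.exp (-x * Real.exp s + s) * (k + 1) ^ (k + 1) *
        max 1 ((x * Real.exp s) ^ k) := by
  have hy : 0 < x * Real.exp s := by positivity
  have h := fx_aux_bound x hx s (max 1 ((x * Real.exp s) ^ k)) k 0 (by
    intro i hi
    rcases le_total (x * Real.exp s) 1 with h1 | h1
    · exact (pow_le_one₀ hy.le h1).trans (le_max_left _ _)
    · exact (pow_le_pow_right₀ h1 (by omega)).trans (le_max_right _ _))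
  simp only [pow_zero, mul_one, Nat.cast_zero, zero_add] at h
  refine h.trans ?_
  have : (1 : ℝ) ≤ (k : ℝ) + 1 := by simp
  gcongr
  omega
end

section
/- For every x > 0 and every non-negative integer k, ∫_{−∞}^{∞} |f_x^{(k)}(s)| ds ≤ (2/x)·e^k·(k+1)^{2k}. -/
open MeasureTheory

noncomputable def gAux (x : ℝ) (n : ℕ) (s : ℝ) : ℝ :=
  (x * Real.exp s) ^ n * Real.exp (-x * Real.exp s + s)

lemma gAux_smooth (x : ℝ) (n : ℕ) (k : WithTop ℕ∞) : ContDiff ℝ k (gAux x n) := by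
  unfold gAux
  fun_prop

lemma gAux_deriv (x : ℝ) (n : ℕ) :
    deriv (gAux x n) = fun s => ((n : ℝ) + 1) * gAux x n s - gAux x (n + 1) s := by
  funext s
  have h1 : HasDerivAt (fun s => x * Real.exp s) (x * Real.exp s) s :=
    (Real.hasDerivAt_exp s).const_mul x
  have h2 : HasDerivAt (fun s => -x * Real.exp s + s) (-x * Real.exp s + 1) s :=
    ((Real.hasDerivAt_exp s).const_mul (-x)).add (hasDerivAt_id s)
  have h3 := (h1.pow n).mul h2.exp
  have h4 : deriv (gAux x n) s = _ := h3.deriv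
  rw [h4]
  unfold gAux
  rcases n with _ | n
  · simp; ring
  · simp; ring

lemma gAux_base (x : ℝ) (hx : 0 < x) (n : ℕ) :
    ∫⁻ s : ℝ, ENNReal.ofReal |gAux x n s| = ENNReal.ofReal ((n.factorial : ℝ) / x) := by
  have himg : (fun s => x * Real.exp s) '' Set.univ = Set.Ioi 0 := by
    ext y
    simp only [Set.image_univ, Set.mem_range, Set.mem_Ioi]
    constructor
    · rintro ⟨s, rfl⟩; positivity
    · intro hy
      refine ⟨Real.log (y / x), ?_⟩
      rw [Real.exp_log (by positivity)]
      field_simp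
  have hcv := lintegral_image_eq_lintegral_abs_deriv_mul (s := Set.univ)
    (f := fun s => x * Real.exp s) (f' := fun s => x * Real.exp s) MeasurableSet.univ
    (fun s _ => ((Real.hasDerivAt_exp s).const_mul x).hasDerivWithinAt)
    (fun a _ b _ hab => Real.exp_injective (mul_left_cancel₀ hx.ne' hab))
    (fun u => ENNReal.ofReal (Real.exp (-u) * u ^ ((n + 1 : ℝ) - 1) / x))
  rw [himg, Measure.restrict_univ] at hcv
  have hG : IntegrableOn (fun u : ℝ => Real.exp (-u) * u ^ ((n + 1 : ℝ) - 1)) (Set.Ioi 0) :=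
    Real.GammaIntegral_convergent (by positivity)
  have hI : ∫⁻ u in Set.Ioi (0 : ℝ), ENNReal.ofReal (Real.exp (-u) * u ^ ((n + 1 : ℝ) - 1) / x)
      = ENNReal.ofReal ((n.factorial : ℝ) / x) := by
    rw [← ofReal_integral_eq_lintegral_ofReal (hG.div_const x), integral_div,
      ← Real.Gamma_eq_integral (by positivity), Real.Gamma_nat_eq_factorial]
    filter_upwards [ae_restrict_mem measurableSet_Ioi] with u hu
    have : (0 : ℝ) < u := hu
    simp only [Pi.zero_apply]
    positivity
  rw [← hI, hcv]
  refine lintegral_congr fun s => ?_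
  rw [← ENNReal.ofReal_mul (abs_nonneg _)]
  congr 1
  have h0 : 0 < x * Real.exp s := by positivity
  unfold gAux
  rw [abs_of_pos (by positivity), abs_of_pos h0, add_sub_cancel_right, Real.rpow_natCast,
    Real.exp_add]
  field_simp

lemma gAux_bound (x : ℝ) (hx : 0 < x) (k : ℕ) : ∀ n : ℕ,
    ∫⁻ s : ℝ, ENNReal.ofReal |iteratedDeriv k (gAux x n) s| ≤
      ENNReal.ofReal (2 ^ k * ((n + k).factorial : ℝ) / x) := by
  induction k with
  | zero => intro n; simp [gAux_base x hx n]
  | succ k ih =>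
    intro n
    have hd : ∀ s, iteratedDeriv (k + 1) (gAux x n) s =
        ((n : ℝ) + 1) * iteratedDeriv k (gAux x n) s - iteratedDeriv k (gAux x (n + 1)) s := by
      intro s
      rw [iteratedDeriv_succ', gAux_deriv]
      rw [iteratedDeriv_fun_sub (contDiff_const.mul (gAux_smooth x n _)).contDiffAt
        (gAux_smooth x (n + 1) _).contDiffAt, iteratedDeriv_const_mul_field]
    have hm : ∀ m, Measurable fun s => ENNReal.ofReal |iteratedDeriv k (gAux x m) s| := by
      intro m
      have := ((gAux_smooth x m k).continuous_iteratedDeriv k le_rfl)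
      exact (ENNReal.continuous_ofReal.comp this.abs).measurable
    calc ∫⁻ s : ℝ, ENNReal.ofReal |iteratedDeriv (k + 1) (gAux x n) s|
        ≤ ∫⁻ s : ℝ, (ENNReal.ofReal ((n : ℝ) + 1) * ENNReal.ofReal |iteratedDeriv k (gAux x n) s|
          + ENNReal.ofReal |iteratedDeriv k (gAux x (n + 1)) s|) := by
          refine lintegral_mono fun s => ?_
          rw [hd, ← ENNReal.ofReal_mul (by positivity), ← ENNReal.ofReal_add (by positivity)
            (abs_nonneg _)]
          apply ENNReal.ofReal_le_ofReal
          refine (abs_sub _ _).trans ?_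
          rw [abs_mul, abs_of_nonneg (by positivity : (0 : ℝ) ≤ (n : ℝ) + 1)]
      _ = ENNReal.ofReal ((n : ℝ) + 1) * (∫⁻ s : ℝ, ENNReal.ofReal |iteratedDeriv k (gAux x n) s|)
          + ∫⁻ s : ℝ, ENNReal.ofReal |iteratedDeriv k (gAux x (n + 1)) s| := by
          rw [lintegral_add_right _ (hm _), lintegral_const_mul _ (hm _)]
      _ ≤ ENNReal.ofReal ((n : ℝ) + 1) * ENNReal.ofReal (2 ^ k * ((n + k).factorial : ℝ) / x)
          + ENNReal.ofReal (2 ^ k * ((n + 1 + k).factorial : ℝ) / x) := by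
          gcongr
          · exact ih n
          · exact ih (n + 1)
      _ ≤ _ := by
          rw [← ENNReal.ofReal_mul (by positivity), ← ENNReal.ofReal_add (by positivity)
            (by positivity)]
          apply ENNReal.ofReal_le_ofReal
          rw [← mul_div_assoc, ← add_div]
          apply div_le_div_of_nonneg_right _ hx.le
          rw [show n + 1 + k = n + k + 1 by ring, show n + (k + 1) = n + k + 1 by ring,
            Nat.factorial_succ]
          push_cast
          have : (0 : ℝ) ≤ 2 ^ k * ((n + k).factorial : ℝ) * k := by positivity
          rw [pow_succ]
          nlinarith

/-- **Lemma 3 (smoothness: `L¹` bound on the derivatives of `fₓ`).**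
For `fₓ(s) = exp (-x * exp s + s)`,
`∫_{-∞}^∞ |fₓ⁽ᵏ⁾(s)| ds ≤ (2/x) * e^k * (k+1)^(2k)`.
(The integral is stated as a Lebesgue integral, so the bound in particular
asserts finiteness, i.e. integrability.) -/
theorem integral_abs_iteratedDeriv_fx_le (x : ℝ) (hx : 0 < x) (k : ℕ) :
    ∫⁻ s : ℝ, ENNReal.ofReal
        |iteratedDeriv k (fun s : ℝ => Real.exp (-x * Real.exp s + s)) s| ≤
      ENNReal.ofReal (2 / x * Real.exp 1 ^ k * (k + 1) ^ (2 * k)) := by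
  have h0 : (fun s : ℝ => Real.exp (-x * Real.exp s + s)) = gAux x 0 := by
    funext s; simp [gAux]
  rw [h0]
  refine (gAux_bound x hx k 0).trans (ENNReal.ofReal_le_ofReal ?_)
  have he : (2 : ℝ) ≤ Real.exp 1 := by
    have := Real.add_one_le_exp (1 : ℝ); linarith
  have h1 : (2 : ℝ) ^ k ≤ Real.exp 1 ^ k := by gcongr
  have h2 : ((0 + k).factorial : ℝ) ≤ ((k : ℝ) + 1) ^ (2 * k) := by
    rw [zero_add]
    have h3 : k.factorial ≤ (k + 1) ^ (2 * k) :=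
      (Nat.factorial_le_pow k).trans ((Nat.pow_le_pow_left (Nat.le_succ k) k).trans
        (Nat.pow_le_pow_right (Nat.succ_pos k) (by omega)))
    exact_mod_cast h3
  have h4 : (2 : ℝ) ^ k * ((0 + k).factorial : ℝ) ≤ Real.exp 1 ^ k * ((k : ℝ) + 1) ^ (2 * k) := by
    gcongr
  have h5 : 0 ≤ Real.exp 1 ^ k * ((k : ℝ) + 1) ^ (2 * k) := by positivity
  rw [show 2 / x * Real.exp 1 ^ k * ((k : ℝ) + 1) ^ (2 * k)
    = 2 * (Real.exp 1 ^ k * ((k : ℝ) + 1) ^ (2 * k)) / x by ring]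
  apply div_le_div_of_nonneg_right _ hx.le
  linarith
end

section
/- For every non-negative integer k and every s ∈ [0,1], |B_{2k}(s)|/(2k)! ≤ |b_{2k}|/(2k)! ≤ 4/(2π)^{2k}, where B_{2k} is the 2k-th Bernoulli polynomial and b_{2k} is the 2k-th Bernoulli number. -/
open Real

/-- **Lemma 4 (Bernoulli bounds).** For every `k ≥ 0` and `s ∈ [0,1]`,
`|B_{2k}(s)| / (2k)! ≤ |b_{2k}| / (2k)! ≤ 4 / (2π)^(2k)`, where `B_{2k}` is the `2k`-th
Bernoulli polynomial and `b_{2k}` the `2k`-th Bernoulli number. -/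
theorem bernoulli_poly_bound (k : ℕ) (s : ℝ) (hs : s ∈ Set.Icc (0 : ℝ) 1) :
    |Polynomial.aeval s (Polynomial.bernoulli (2 * k))| / (2 * k).factorial ≤
      |(bernoulli (2 * k) : ℝ)| / (2 * k).factorial ∧
    |(bernoulli (2 * k) : ℝ)| / (2 * k).factorial ≤ 4 / (2 * π) ^ (2 * k) := by
  rcases Nat.eq_zero_or_pos k with rfl | hk
  · norm_num
  have hk0 : k ≠ 0 := hk.ne'
  have h1 := hasSum_one_div_nat_pow_mul_cos hk0 hs
  have h0 := hasSum_one_div_nat_pow_mul_cos hk0 (Set.left_mem_Icc.mpr (zero_le_one' ℝ))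
  rw [Polynomial.eval_zero_map, Polynomial.bernoulli_eval_zero, eq_ratCast] at h0
  rw [Polynomial.eval_map_algebraMap] at h1
  simp only [mul_zero, Real.cos_zero, mul_one] at h0
  have h2 := hasSum_zeta_two
  have hF : (0 : ℝ) < (2 * k).factorial := by exact_mod_cast Nat.factorial_pos _
  have hP : (0 : ℝ) < (2 * π) ^ (2 * k) := by positivity
  have habs : ∀ y : ℝ, |(-1 : ℝ) ^ (k + 1) * (2 * π) ^ (2 * k) / 2 / (2 * k).factorial * y|
      = (2 * π) ^ (2 * k) / 2 * (|y| / (2 * k).factorial) := by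
    intro y
    rw [abs_mul, abs_div, abs_div, abs_mul, abs_pow, abs_neg, abs_one, one_pow, one_mul,
      abs_of_pos hP, abs_of_pos hF, abs_two]
    ring
  have hnn : ∀ n : ℕ, (0 : ℝ) ≤ 1 / (n : ℝ) ^ (2 * k) := fun n => by positivity
  have hS0 := h0.nonneg hnn
  have e0 := habs (bernoulli (2 * k) : ℝ)
  rw [abs_of_nonneg hS0] at e0
  have e1 := habs (Polynomial.aeval s (Polynomial.bernoulli (2 * k)))
  have hle : ∀ n : ℕ, |1 / (n : ℝ) ^ (2 * k) * Real.cos (2 * π * n * s)|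
      ≤ 1 / (n : ℝ) ^ (2 * k) := by
    intro n
    rw [abs_mul, abs_of_nonneg (hnn n)]
    exact mul_le_of_le_one_right (hnn n) (Real.abs_cos_le_one _)
  have i1 := hasSum_le (fun n => (abs_le.mp (hle n)).2) h1 h0
  have i2 := hasSum_le (fun n => (abs_le.mp (hle n)).1) h0.neg h1
  have i3 := abs_le.mpr ⟨i2, i1⟩
  rw [e1, e0] at i3
  have i4 := hasSum_le (fun n : ℕ => ?_) h0 h2
  · refine ⟨le_of_mul_le_mul_left i3 (by positivity), ?_⟩
    rw [e0] at i4
    rw [le_div_iff₀ hP]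
    have := Real.pi_lt_d2
    have := Real.pi_pos
    nlinarith
  · rcases Nat.eq_zero_or_pos n with rfl | hn
    · simp [hk0]
    · have : (1 : ℝ) ≤ n := by exact_mod_cast hn
      exact one_div_le_one_div_of_le (by positivity) (pow_le_pow_right₀ this (by omega))
end

section
/- (Euler–Maclaurin formula) Let g : ℝ → ℝ be 2N-times continuously differentiable, let a < b, h > 0, and suppose K := (b−a)/h is a positive integer. Then ∫_a^b g(s) ds − T_g = h^{2N+1}·∫_0^K (B_{2N}(s−⌊s⌋)/(2N)!)·g^{(2N)}(a+sh) ds − Σ_{j=1}^N (b_{2j}/(2j)!)·h^{2j}·(g^{(2j−1)}(b) − g^{(2j−1)}(a)), where T_g := (h/2)·Σ_{j=0}^{K−1} (g(a+jh) + g(a+(j+1)h)). -/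
open Real

lemma em_step (F F' : ℝ → ℝ) (k : ℕ) (hF : ∀ x, HasDerivAt F (F' x) x) (hF' : Continuous F')
    (c : ℝ) :
    ∫ s in (0:ℝ)..1, bernoulliFun k s / k.factorial * F (s + c) =
      bernoulliFun (k+1) 1 / (k+1).factorial * F (1 + c)
      - bernoulliFun (k+1) 0 / (k+1).factorial * F (0 + c)
      - ∫ s in (0:ℝ)..1, bernoulliFun (k+1) s / (k+1).factorial * F' (s + c) := by
  have h1 : ∀ x : ℝ, HasDerivAt (fun s => bernoulliFun (k+1) s / (k+1).factorial)
      (bernoulliFun k x / k.factorial) x := by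
    intro x
    have := (hasDerivAt_bernoulliFun (k+1) x).div_const ((k+1).factorial : ℝ)
    refine this.congr_deriv ?_
    rw [Nat.factorial_succ]
    have : (k.factorial : ℝ) ≠ 0 := by positivity
    have : (k + 1 : ℝ) ≠ 0 := by positivity
    push_cast
    field_simp
  have h2 : ∀ x : ℝ, HasDerivAt (fun s => F (s + c)) (F' (x + c)) x := by
    intro x
    exact (hF (x + c)).comp_add_const x c
  have h3 : Continuous (fun x : ℝ => bernoulliFun k x / k.factorial) :=
    (continuous_bernoulliFun k).div_const _
  have h4 : Continuous (fun x : ℝ => F' (x + c)) := by fun_prop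
  have := intervalIntegral.integral_mul_deriv_eq_deriv_mul (a := 0) (b := 1)
    (fun x _ => h1 x) (fun x _ => h2 x)
    (h3.intervalIntegrable _ _) (h4.intervalIntegrable _ _)
  linarith

lemma em_unit (N : ℕ) (F : ℕ → ℝ → ℝ)
    (hF : ∀ n < 2 * (N + 1), ∀ x, HasDerivAt (F n) (F (n+1) x) x)
    (hc : ∀ n ≤ 2 * (N + 1), Continuous (F n)) (c : ℝ) :
    (∫ s in (0:ℝ)..1, F 0 (s + c)) - 1 / 2 * (F 0 c + F 0 (c + 1)) =
      (∫ s in (0:ℝ)..1, bernoulliFun (2 * (N+1)) s / (2 * (N+1)).factorial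
        * F (2 * (N+1)) (s + c)) -
      ∑ j ∈ Finset.Icc 1 (N+1), (bernoulli (2 * j) : ℝ) / (2 * j).factorial *
        (F (2 * j - 1) (c + 1) - F (2 * j - 1) c) := by
  induction N with
  | zero =>
    have e0 := em_step (F 0) (F 1) 0 (hF 0 (by norm_num)) (hc 1 (by norm_num)) c
    have e1 := em_step (F 1) (F 2) 1 (hF 1 (by norm_num)) (hc 2 (by norm_num)) c
    have b1 : bernoulliFun 2 1 = bernoulli 2 := by
      rw [bernoulliFun_eval_one, bernoulliFun_eval_zero]; simp
    have b0 := bernoulliFun_eval_zero 2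
    simp only [Nat.reduceAdd, b1, b0] at e0 e1
    simp only [bernoulliFun_zero, bernoulliFun_one, Nat.factorial] at e0 e1
    simp only [zero_add, mul_one, Finset.Icc_self, Finset.sum_singleton, Nat.factorial,
      Nat.reduceSub, bernoulliFun_one]
    norm_num at e0 e1 ⊢
    rw [add_comm c 1]
    linarith
  | succ N ih =>
    have ih := ih (fun n hn => hF n (by omega)) (fun n hn => hc n (by omega))
    have e0 := em_step (F (2*(N+1))) (F (2*(N+1)+1)) (2*(N+1)) (hF _ (by omega))
      (hc _ (by omega)) c
    have e1 := em_step (F (2*(N+1)+1)) (F (2*(N+1)+1+1)) (2*(N+1)+1) (hF _ (by omega))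
      (hc _ (by omega)) c
    have b1 : bernoulliFun (2*(N+1)+1+1) 1 = bernoulli (2*(N+1)+1+1) := by
      rw [bernoulliFun_eval_one, bernoulliFun_eval_zero]; simp
    have b0 := bernoulliFun_eval_zero (2*(N+1)+1+1)
    have z : bernoulli (2*(N+1)+1) = 0 := bernoulli_eq_zero_of_odd ⟨N+1, rfl⟩ (by omega)
    have c1 : bernoulliFun (2*(N+1)+1) 1 = 0 := by
      rw [bernoulliFun_eval_one, bernoulliFun_eval_zero, z]; simp
    have c0 : bernoulliFun (2*(N+1)+1) 0 = 0 := by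
      rw [bernoulliFun_eval_zero, z]; simp
    rw [c1, c0] at e0
    rw [b1, b0] at e1
    rw [ih, Finset.sum_Icc_succ_top (show 1 ≤ (N + 1) + 1 by omega), show 2 * (N+1+1) = 2*(N+1)+1+1 by ring, e0, e1]
    simp only [Nat.add_sub_cancel, zero_div, zero_mul, zero_add]
    rw [add_comm c 1]
    ring

lemma em_fract (B G : ℝ → ℝ) (hB : Continuous B) (hG : Continuous G) (K : ℕ) :
    ∫ s in (0:ℝ)..K, B (Int.fract s) * G s =
      ∑ j ∈ Finset.range K, ∫ s in (0:ℝ)..1, B s * G (s + j) := by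
  have key : ∀ j : ℕ, Set.EqOn (fun s : ℝ => B (Int.fract s) * G s)
      (fun s => B (s - j) * G s) (Set.uIoo (j:ℝ) ((j+1 : ℕ):ℝ)) := by
    intro j s hs
    rw [Set.uIoo_of_le (by push_cast; linarith)] at hs
    have : ⌊s⌋ = (j:ℤ) := by
      rw [Int.floor_eq_iff]; push_cast; have := hs.2; push_cast at this
      exact ⟨hs.1.le, this⟩
    have : Int.fract s = s - j := by rw [Int.fract, this]; simp
    simp only [this]
  have hint : ∀ j < K, IntervalIntegrable (fun s : ℝ => B (Int.fract s) * G s)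
      MeasureTheory.volume ((j:ℕ):ℝ) ((j+1 : ℕ):ℝ) := by
    intro j _
    have : Continuous (fun s : ℝ => B (s - j) * G s) := by fun_prop
    exact (this.intervalIntegrable _ _).congr_uIoo (key j).symm
  have := intervalIntegral.sum_integral_adjacent_intervals (a := fun n : ℕ => (n:ℝ)) hint
  simp only [Nat.cast_zero] at this
  rw [← this]
  refine Finset.sum_congr rfl fun j _ => ?_
  rw [intervalIntegral.integral_congr_uIoo (key j)]
  have := intervalIntegral.integral_comp_add_right (a := 0) (b := 1)
    (fun s : ℝ => B (s - j) * G s) (j:ℝ)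
  simp only [add_sub_cancel_right] at this
  rw [this]
  congr 1 <;> push_cast <;> ring



/-- **Euler–Maclaurin formula for the trapezoidal rule.** Let `g : ℝ → ℝ` be `2N`-times
continuously differentiable, `a < b`, `h > 0`, and `K = (b-a)/h` a positive integer. Then
`∫_a^b g - T_g = h^(2N+1) ∫_0^K (B_{2N}({s})/(2N)!) g⁽²ᴺ⁾(a+sh) ds
  - ∑_{j=1}^N (b_{2j}/(2j)!) h^(2j) (g⁽²ʲ⁻¹⁾(b) - g⁽²ʲ⁻¹⁾(a))`,
where `T_g = (h/2) ∑_{j=0}^{K-1} (g(a+jh) + g(a+(j+1)h))` and `{s} = s - ⌊s⌋`. -/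
theorem euler_maclaurin (N : ℕ) (hN : 0 < N) (g : ℝ → ℝ)
    (hg : ContDiff ℝ (2 * N : ℕ) g) (a b h : ℝ) (hab : a < b) (hh : 0 < h)
    (K : ℕ) (hK : 0 < K) (hKh : (b - a) / h = K) :
    (∫ s in a..b, g s) -
        h / 2 * ∑ j ∈ Finset.range K, (g (a + j * h) + g (a + (j + 1) * h)) =
      h ^ (2 * N + 1) *
          (∫ s in (0 : ℝ)..(K : ℝ),
            Polynomial.aeval (Int.fract s) (Polynomial.bernoulli (2 * N)) /
                (2 * N).factorial *
              iteratedDeriv (2 * N) g (a + s * h)) -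
        ∑ j ∈ Finset.Icc 1 N,
          (bernoulli (2 * j) : ℝ) / (2 * j).factorial * h ^ (2 * j) *
            (iteratedDeriv (2 * j - 1) g b - iteratedDeriv (2 * j - 1) g a) := by
  have hb : b = a + K * h := by field_simp at hKh; linarith
  obtain ⟨M, rfl⟩ : ∃ M, N = M + 1 := ⟨N - 1, by omega⟩
  set F : ℕ → ℝ → ℝ := fun n s => h ^ (n+1) * iteratedDeriv n g (a + s * h) with hFdef
  have hc : ∀ n ≤ 2 * (M + 1), Continuous (F n) := by
    intro n hn
    have : Continuous (iteratedDeriv n g) :=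
      hg.continuous_iteratedDeriv n (by exact_mod_cast hn)
    simp only [hFdef]
    fun_prop
  have hF : ∀ n < 2 * (M + 1), ∀ x, HasDerivAt (F n) (F (n+1) x) x := by
    intro n hn x
    have hd : Differentiable ℝ (iteratedDeriv n g) :=
      hg.differentiable_iteratedDeriv n (by exact_mod_cast hn)
    have h1 := (hd (a + x * h)).hasDerivAt
    rw [← iteratedDeriv_succ] at h1
    have h2 : HasDerivAt (fun s : ℝ => a + s * h) h x := by
      simpa using ((hasDerivAt_id x).mul_const h).const_add a
    have h3 := (h1.comp x h2).const_mul (h ^ (n+1))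
    refine h3.congr_deriv ?_
    simp only [hFdef]; ring
  have hs := Finset.sum_congr (rfl : Finset.range K = Finset.range K)
    (fun j _ => em_unit M F hF hc (j:ℝ))
  simp only [Finset.sum_sub_distrib, ← Finset.mul_sum] at hs
  rw [Finset.sum_comm] at hs
  simp only [← Finset.mul_sum] at hs
  have e1 := em_fract (fun _ => 1) (F 0) continuous_const (hc 0 (by omega)) K
  have e2 := em_fract (fun s => bernoulliFun (2*(M+1)) s / (2*(M+1)).factorial) (F (2*(M+1)))
    ((continuous_bernoulliFun _).div_const _) (hc _ le_rfl) K
  simp only [one_mul] at e1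
  rw [← e1, ← e2] at hs
  have t1 : ∫ s in (0:ℝ)..K, F 0 s = ∫ s in a..b, g s := by
    have := intervalIntegral.mul_integral_comp_add_mul (a := 0) (b := (K:ℝ)) (f := g) h a
    simp only [hFdef, iteratedDeriv_zero, zero_add, pow_one, intervalIntegral.integral_const_mul]
    rw [hb]
    simpa [mul_comm] using this
  have t2 : ∀ n, ∑ j ∈ Finset.range K, (F n (j + 1) - F n j) = F n K - F n 0 := by
    intro n
    have := Finset.sum_range_sub (fun j : ℕ => F n j) K
    simpa using this
  have t3 : ∑ i ∈ Finset.range K, (F 0 i + F 0 (i + 1))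
      = h * ∑ j ∈ Finset.range K, (g (a + j * h) + g (a + (j + 1) * h)) := by
    rw [Finset.mul_sum]
    refine Finset.sum_congr rfl fun j _ => ?_
    simp only [hFdef, iteratedDeriv_zero]; ring
  have t4 : ∫ s in (0:ℝ)..K, bernoulliFun (2*(M+1)) (Int.fract s) / (2*(M+1)).factorial
        * F (2*(M+1)) s = h ^ (2 * (M+1) + 1) *
          (∫ s in (0 : ℝ)..(K : ℝ),
            Polynomial.aeval (Int.fract s) (Polynomial.bernoulli (2 * (M+1))) /
                (2 * (M+1)).factorial *
              iteratedDeriv (2 * (M+1)) g (a + s * h)) := by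
    rw [← intervalIntegral.integral_const_mul]
    refine intervalIntegral.integral_congr fun s _ => ?_
    simp only [hFdef, bernoulliFun, Polynomial.eval_map_algebraMap]
    ring
  have t5 : ∑ j ∈ Finset.Icc 1 (M+1), (bernoulli (2 * j) : ℝ) / (2 * j).factorial *
        (F (2 * j - 1) K - F (2 * j - 1) 0) = ∑ j ∈ Finset.Icc 1 (M+1),
          (bernoulli (2 * j) : ℝ) / (2 * j).factorial * h ^ (2 * j) *
            (iteratedDeriv (2 * j - 1) g b - iteratedDeriv (2 * j - 1) g a) := by
    refine Finset.sum_congr rfl fun j hj => ?_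
    have : 1 ≤ j := (Finset.mem_Icc.mp hj).1
    simp only [hFdef]
    rw [show 2 * j - 1 + 1 = 2 * j by omega, hb]
    simp only [zero_mul, add_zero]
    ring
  simp only [t2] at hs
  rw [t1, t3, t4, t5] at hs
  rw [← hs]; ring
end

section
/- (Euler–Maclaurin on [0,1]) Let N be a positive integer and g : ℝ → ℝ be 2N-times continuously differentiable. Then ∫_0^1 g(s) ds − (1/2)(g(0) + g(1)) = ∫_0^1 (B_{2N}(s)/(2N)!)·g^{(2N)}(s) ds − Σ_{j=1}^N (b_{2j}/(2j)!)·(g^{(2j−1)}(1) − g^{(2j−1)}(0)). -/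
open Real

lemma em_step_s10 (k : ℕ) (g : ℝ → ℝ) (hg : ContDiff ℝ (k + 1 : ℕ) g) :
    (∫ s in (0 : ℝ)..1, bernoulliFun k s / k.factorial * iteratedDeriv k g s) =
      bernoulliFun (k + 1) 1 / (k + 1).factorial * iteratedDeriv k g 1
      - bernoulliFun (k + 1) 0 / (k + 1).factorial * iteratedDeriv k g 0
      - ∫ s in (0 : ℝ)..1, bernoulliFun (k + 1) s / (k + 1).factorial *
          iteratedDeriv (k + 1) g s := by
  have h1 : ∀ x : ℝ, HasDerivAt (fun s => bernoulliFun (k + 1) s / (k + 1).factorial)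
      (bernoulliFun k x / k.factorial) x := by
    intro x
    convert! (hasDerivAt_bernoulliFun (k + 1) x).div_const ((k + 1).factorial : ℝ) using 1
    have : (k.factorial : ℝ) ≠ 0 := by positivity
    have : (k : ℝ) + 1 ≠ 0 := by positivity
    rw [Nat.factorial_succ]
    push_cast
    field_simp
  have h2 : ∀ x : ℝ, HasDerivAt (iteratedDeriv k g) (iteratedDeriv (k + 1) g x) x := by
    intro x
    rw [iteratedDeriv_succ]
    exact ((hg.differentiable_iteratedDeriv k (by exact_mod_cast Nat.lt_succ_self k)) x).hasDerivAt
  have hc : Continuous (iteratedDeriv (k + 1) g) := hg.continuous_iteratedDeriv (k + 1) le_rfl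
  have h := intervalIntegral.integral_mul_deriv_eq_deriv_mul (a := 0) (b := 1)
    (fun x _ => h1 x) (fun x _ => h2 x)
    (((continuous_bernoulliFun k).div_const _).intervalIntegrable _ _)
    (hc.intervalIntegrable _ _)
  linarith

lemma em_aux (N : ℕ) (hN : 1 ≤ N) (g : ℝ → ℝ) (hg : ContDiff ℝ (2 * N : ℕ) g) :
    (∫ s in (0 : ℝ)..1, g s) - 1 / 2 * (g 0 + g 1) =
      (∫ s in (0 : ℝ)..1,
          bernoulliFun (2 * N) s / (2 * N).factorial *
            iteratedDeriv (2 * N) g s) -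
        ∑ j ∈ Finset.Icc 1 N,
          (bernoulli (2 * j) : ℝ) / (2 * j).factorial *
            (iteratedDeriv (2 * j - 1) g 1 - iteratedDeriv (2 * j - 1) g 0) := by
  induction N, hN using Nat.le_induction with
  | base =>
    have e0 := em_step_s10 0 g (hg.of_le (by exact_mod_cast (by norm_num)))
    have e1 := em_step_s10 1 g hg
    have b1 := bernoulliFun_endpoints_eq_of_ne_one (k := 2) (by norm_num)
    have b0 := bernoulliFun_eval_zero 2
    norm_num [b1, b0, -bernoulliFun_two, -bernoulli_two] at e0 e1 ⊢
    linarith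
  | succ n hn ih =>
    have e0 := em_step_s10 (2 * n) g (hg.of_le (by exact_mod_cast (by lia)))
    have e1 := em_step_s10 (2 * n + 1) g hg
    rw [ih (hg.of_le (by exact_mod_cast (by lia))), Finset.sum_Icc_succ_top (by lia), e0, e1]
    rw [bernoulliFun_endpoints_eq_of_ne_one (k := 2 * n + 1) (by lia),
      bernoulliFun_endpoints_eq_of_ne_one (k := 2 * n + 1 + 1) (by lia),
      bernoulliFun_eval_zero, bernoulliFun_eval_zero,
      bernoulli_eq_zero_of_odd (n := 2 * n + 1) ⟨n, rfl⟩ (by lia)]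
    rw [show 2 * (n + 1) = 2 * n + 1 + 1 by ring, Nat.add_sub_cancel]
    push_cast
    ring



/-- **Euler–Maclaurin formula on `[0,1]`.** For `g : ℝ → ℝ` `2N`-times continuously
differentiable (`N ≥ 1`),
`∫_0^1 g - (g(0)+g(1))/2 = ∫_0^1 (B_{2N}(s)/(2N)!) g⁽²ᴺ⁾(s) ds
  - ∑_{j=1}^N (b_{2j}/(2j)!) (g⁽²ʲ⁻¹⁾(1) - g⁽²ʲ⁻¹⁾(0))`. -/
theorem euler_maclaurin_unit_interval (N : ℕ) (hN : 0 < N) (g : ℝ → ℝ)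
    (hg : ContDiff ℝ (2 * N : ℕ) g) :
    (∫ s in (0 : ℝ)..1, g s) - 1 / 2 * (g 0 + g 1) =
      (∫ s in (0 : ℝ)..1,
          Polynomial.aeval s (Polynomial.bernoulli (2 * N)) / (2 * N).factorial *
            iteratedDeriv (2 * N) g s) -
        ∑ j ∈ Finset.Icc 1 N,
          (bernoulli (2 * j) : ℝ) / (2 * j).factorial *
            (iteratedDeriv (2 * j - 1) g 1 - iteratedDeriv (2 * j - 1) g 0) := by

  have h := em_aux N hN g hg
  simpa only [bernoulliFun, Polynomial.eval_map_algebraMap] using h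
end

section
/- For every x > 0, every h > 0, and every positive integer N, the doubly infinite sum h·Σ_{j∈ℤ} f_x(jh) converges and |∫_{−∞}^{∞} f_x(s) ds − h·Σ_{j∈ℤ} f_x(jh)| ≤ 4·(h/(2π))^{2N}·∫_{−∞}^{∞} |f_x^{(2N)}(s)| ds. -/
open Real MeasureTheory
open scoped FourierTransform

/-- the polynomials occurring in the derivatives -/
noncomputable def trapPoly (x : ℝ) : ℕ → Polynomial ℝ
  | 0 => 1
  | k + 1 => Polynomial.X * Polynomial.derivative (trapPoly x k) +
      (1 - Polynomial.C x * Polynomial.X) * trapPoly x k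

/-- explicit k-th derivative -/
noncomputable def trapF (x : ℝ) (k : ℕ) (s : ℝ) : ℝ :=
  (trapPoly x k).eval (Real.exp s) * Real.exp (-x * Real.exp s + s)

lemma trapF_zero (x : ℝ) : trapF x 0 = fun s => Real.exp (-x * Real.exp s + s) := by
  funext s; simp [trapF, trapPoly]

lemma trapF_hasDerivAt (x : ℝ) (k : ℕ) (s : ℝ) :
    HasDerivAt (trapF x k) (trapF x (k + 1) s) s := by
  have h1 : HasDerivAt (fun s => (trapPoly x k).eval (Real.exp s))
      ((Polynomial.derivative (trapPoly x k)).eval (Real.exp s) * Real.exp s) s :=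
    ((trapPoly x k).hasDerivAt (Real.exp s)).comp s (Real.hasDerivAt_exp s)
  have h2 : HasDerivAt (fun s => Real.exp (-x * Real.exp s + s))
      (Real.exp (-x * Real.exp s + s) * (-x * Real.exp s + 1)) s :=
    (((Real.hasDerivAt_exp s).const_mul (-x)).add (hasDerivAt_id s)).exp
  refine (h1.mul h2).congr_deriv ?_
  simp only [trapF, trapPoly, Polynomial.eval_add, Polynomial.eval_mul, Polynomial.eval_X,
    Polynomial.eval_sub, Polynomial.eval_one, Polynomial.eval_C]
  ring

lemma iteratedDeriv_chain {E : Type*} [NormedAddCommGroup E] [NormedSpace ℝ E] (F : ℕ → ℝ → E)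
    (hF : ∀ k s, HasDerivAt (F k) (F (k + 1) s) s) (k : ℕ) : iteratedDeriv k (F 0) = F k := by
  induction k with
  | zero => simp
  | succ k ih =>
    rw [iteratedDeriv_succ, ih]
    funext s
    exact (hF k s).deriv

lemma one_add_sq_bound (s : ℝ) : Real.exp (-|s|) ≤ 2 * (1 + s ^ 2)⁻¹ := by
  have h := Real.quadratic_le_exp_of_nonneg (abs_nonneg s)
  rw [sq_abs] at h
  rw [Real.exp_neg, ← div_eq_mul_inv, le_div_iff₀ (by positivity), inv_mul_le_iff₀ (by positivity)]
  have := abs_nonneg s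
  linarith

lemma trap_pow_bound (x : ℝ) (hx : 0 < x) (m : ℕ) (y : ℝ) (hy : 0 < y) :
    y ^ m * Real.exp (-x * y) ≤ m.factorial / x ^ m := by
  have h := Real.pow_div_factorial_le_exp (x * y) (by positivity) m
  rw [neg_mul, Real.exp_neg, ← div_eq_mul_inv, div_le_div_iff₀ (Real.exp_pos _) (by positivity)]
  rw [div_le_iff₀ (by positivity), mul_pow] at h
  linarith

lemma trap_poly_bound (x : ℝ) (hx : 0 < x) (P : Polynomial ℝ) :
    ∃ C : ℝ, ∀ s : ℝ, |P.eval (Real.exp s) * Real.exp (-x * Real.exp s + s)| ≤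
      C * (1 + s ^ 2)⁻¹ := by
  induction P using Polynomial.induction_on' with
  | add p q hp hq =>
    obtain ⟨C, hC⟩ := hp
    obtain ⟨D, hD⟩ := hq
    refine ⟨C + D, fun s => ?_⟩
    rw [Polynomial.eval_add, add_mul, add_mul]
    exact (abs_add_le _ _).trans (add_le_add (hC s) (hD s))
  | monomial n a =>
    set D : ℝ := n.factorial / x ^ n + (n + 2).factorial / x ^ (n + 2) with hD
    have hA : 0 ≤ n.factorial / x ^ n := by positivity
    have hB : 0 ≤ (n + 2).factorial / x ^ (n + 2) := by positivity
    have key : ∀ s : ℝ, Real.exp s ^ n * Real.exp (-x * Real.exp s + s) ≤ D * Real.exp (-|s|) := by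
      intro s
      rw [Real.exp_add, ← mul_assoc]
      rcases le_total 0 s with hs | hs
      · have h := trap_pow_bound x hx (n + 2) _ (Real.exp_pos s)
        rw [abs_of_nonneg hs]
        have e : Real.exp s * Real.exp (-s) = 1 := by rw [← Real.exp_add]; simp
        calc Real.exp s ^ n * Real.exp (-x * Real.exp s) * Real.exp s
            = (Real.exp s ^ (n + 2) * Real.exp (-x * Real.exp s)) * Real.exp (-s) := by
              rw [pow_add]
              linear_combination -Real.exp s ^ n * Real.exp (-x * Real.exp s) * Real.exp s * e
          _ ≤ _ := by
              apply mul_le_mul_of_nonneg_right _ (Real.exp_pos _).le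
              linarith
      · have h := trap_pow_bound x hx n _ (Real.exp_pos s)
        rw [abs_of_nonpos hs, neg_neg]
        apply mul_le_mul_of_nonneg_right _ (Real.exp_pos _).le
        linarith
    refine ⟨|a| * (D * 2), fun s => ?_⟩
    rw [Polynomial.eval_monomial, mul_assoc, abs_mul, mul_assoc]
    apply mul_le_mul_of_nonneg_left _ (abs_nonneg _)
    rw [abs_of_nonneg (by positivity), mul_assoc]
    exact (key s).trans (mul_le_mul_of_nonneg_left (one_add_sq_bound s) (by positivity))

lemma trapF_continuous (x : ℝ) (k : ℕ) : Continuous (trapF x k) :=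
  continuous_iff_continuousAt.2 fun s => (trapF_hasDerivAt x k s).continuousAt

lemma trapF_integrable (x : ℝ) (hx : 0 < x) (k : ℕ) : Integrable (trapF x k) := by
  obtain ⟨C, hC⟩ := trap_poly_bound x hx (trapPoly x k)
  exact (integrable_inv_one_add_sq.const_mul C).mono' (trapF_continuous x k).aestronglyMeasurable
    (Filter.Eventually.of_forall hC)

lemma hasSum_int_inv_sq : HasSum (fun n : ℤ => (1 : ℝ) / (n : ℝ) ^ 2) (π ^ 2 / 3) := by
  have := HasSum.of_nat_of_neg (f := fun n : ℤ => (1 : ℝ) / (n : ℝ) ^ 2)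
    (by simpa using hasSum_zeta_two) (by simpa using hasSum_zeta_two)
  have e : π ^ 2 / 6 + π ^ 2 / 6 - (1 : ℝ) / ((0 : ℤ) : ℝ) ^ 2 = π ^ 2 / 3 := by
    simp; ring
  exact e ▸ this

lemma trap_fourier_bound (g : ℝ → ℂ) (F : ℕ → ℝ → ℂ) (hF0 : F 0 = g)
    (hF : ∀ k s, HasDerivAt (F k) (F (k + 1) s) s) (hI : ∀ k, Integrable (F k))
    (hg : ContDiff ℝ ⊤ g) (k : ℕ) (n : ℝ) :
    (2 * π * |n|) ^ k * ‖𝓕 g n‖ ≤ ∫ t, ‖F k t‖ := by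
  have hd : ∀ k, iteratedDeriv k g = F k := fun k => hF0 ▸ iteratedDeriv_chain F hF k
  have h := congrFun (Real.fourier_iteratedDeriv (f := g) (N := ⊤) (n := k) (hg.of_le le_top)
    (fun m _ => by rw [hd]; exact hI m) le_top) n
  rw [hd] at h
  have h2 := congrArg norm h
  rw [norm_smul, norm_pow] at h2
  have e : ‖(2 * π * Complex.I * n : ℂ)‖ = 2 * π * |n| := by
    simp [abs_of_pos Real.pi_pos]
  rw [e] at h2
  rw [← h2]
  exact VectorFourier.norm_fourierIntegral_le_integral_norm _ _ _ _ _


/-- **Trapezoidal approximation of `∫ fₓ` over `ℝ` (equation (6)).**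
For `fₓ(s) = exp (-x * exp s + s)`, any `h > 0` and any `N ≥ 1`, the doubly infinite sum
`h * ∑_{j ∈ ℤ} fₓ(jh)` converges and
`|∫_{-∞}^∞ fₓ(s) ds - h * ∑_{j ∈ ℤ} fₓ(jh)| ≤ 4 * (h/(2π))^(2N) * ∫_{-∞}^∞ |fₓ⁽²ᴺ⁾(s)| ds`. -/
theorem trapezoid_error_fx (x : ℝ) (hx : 0 < x) (h : ℝ) (hh : 0 < h)
    (N : ℕ) (hN : 0 < N) :
    Summable (fun j : ℤ => Real.exp (-x * Real.exp (j * h) + j * h)) ∧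
    |(∫ s : ℝ, Real.exp (-x * Real.exp s + s)) -
        h * ∑' j : ℤ, Real.exp (-x * Real.exp (j * h) + j * h)| ≤
      4 * (h / (2 * π)) ^ (2 * N) *
        ∫ s : ℝ, |iteratedDeriv (2 * N) (fun s : ℝ => Real.exp (-x * Real.exp s + s)) s| := by
  have hf0 := trapF_zero x
  have hiter : iteratedDeriv (2 * N) (fun s : ℝ => Real.exp (-x * Real.exp s + s)) =
      trapF x (2 * N) := by
    rw [← hf0]; exact iteratedDeriv_chain _ (trapF_hasDerivAt x) _
  set F : ℕ → ℝ → ℂ := fun k t => ((h ^ k * trapF x k (h * t) : ℝ) : ℂ) with hFdef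
  set g : ℝ → ℂ := fun t => ((Real.exp (-x * Real.exp (h * t) + h * t) : ℝ) : ℂ) with hgdef
  have hF0 : F 0 = g := by
    funext t; simp [hFdef, hgdef, hf0]
  have hF : ∀ k s, HasDerivAt (F k) (F (k + 1) s) s := by
    intro k s
    have h1 : HasDerivAt (fun t => trapF x k (h * t)) (trapF x (k + 1) (h * s) * (h * 1)) s :=
      (trapF_hasDerivAt x k (h * s)).comp s ((hasDerivAt_id s).const_mul h)
    have h2 := (h1.const_mul (h ^ k)).ofReal_comp
    convert h2 using 1
    simp only [hFdef]
    congr 1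
    ring
  have hI : ∀ k, Integrable (F k) := fun k =>
    (((trapF_integrable x hx k).comp_mul_left' hh.ne').const_mul (h ^ k)).ofReal
  have hgc : ContDiff ℝ ⊤ g := by
    have : ContDiff ℝ ⊤ (fun t : ℝ => Real.exp (-x * Real.exp (h * t) + h * t)) := by fun_prop
    exact Complex.ofRealCLM.contDiff.comp this
  obtain ⟨C, hC⟩ := trap_poly_bound x hx 1
  simp only [Polynomial.eval_one, one_mul] at hC
  have hCp : 0 ≤ C := by
    have := (abs_nonneg _).trans (hC 0); simpa using this
  have hdec : ∀ t : ℝ, t ≠ 0 → ‖g t‖ ≤ C / h ^ 2 * (1 / t ^ 2) := by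
    intro t ht
    have h1 := hC (h * t)
    rw [hgdef]
    simp only [Complex.norm_real, Real.norm_eq_abs]
    refine h1.trans ?_
    rw [div_mul_div_comm, mul_one, ← div_eq_mul_inv]
    apply div_le_div_of_nonneg_left hCp (by positivity)
    nlinarith
  have hO : g =O[Filter.cocompact ℝ] fun t : ℝ => |t| ^ (-2 : ℝ) := by
    apply Asymptotics.IsBigO.of_bound (C / h ^ 2)
    filter_upwards [(isCompact_singleton (x := (0 : ℝ))).compl_mem_cocompact] with t ht
    refine (hdec t ht).trans (le_of_eq ?_)
    rw [Real.norm_of_nonneg (by positivity), Real.rpow_neg (abs_nonneg t)]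
    norm_num
  have hgsum : Summable (fun j : ℤ => g j) :=
    summable_of_isBigO (Real.summable_abs_int_rpow one_lt_two)
      (hO.comp_tendsto Int.tendsto_coe_cofinite)
  have hsum : Summable (fun j : ℤ => Real.exp (-x * Real.exp (j * h) + j * h)) := by
    have := Complex.summable_ofReal.1 hgsum
    simpa only [mul_comm h] using this
  refine ⟨hsum, ?_⟩
  rw [hiter]
  set I : ℝ := ∫ s, |trapF x (2 * N) s| with hIdef
  have hI0 : 0 ≤ I := integral_nonneg fun _ => abs_nonneg _
  have hint : ∫ t, ‖F (2 * N) t‖ = h ^ (2 * N) * (h⁻¹ * I) := by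
    have : ∀ t, ‖F (2 * N) t‖ = h ^ (2 * N) * |trapF x (2 * N) (h * t)| := by
      intro t
      simp only [hFdef, Complex.norm_real, Real.norm_eq_abs, abs_mul]
      rw [abs_of_nonneg (by positivity : 0 ≤ h ^ (2 * N))]
    simp_rw [this]
    rw [integral_const_mul, Measure.integral_comp_mul_left (fun s => |trapF x (2 * N) s|) h,
      abs_of_pos (inv_pos.2 hh), smul_eq_mul]
  set B : ℝ := (h / (2 * π)) ^ (2 * N) * (h⁻¹ * I) with hB
  have hB0 : 0 ≤ B := by positivity
  have hFb : ∀ n : ℤ, n ≠ 0 → ‖𝓕 g (n : ℝ)‖ ≤ B * (1 / (n : ℝ) ^ 2) := by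
    intro n hn
    have h1 := trap_fourier_bound g F hF0 hF hI hgc (2 * N) n
    rw [hint] at h1
    have hn1 : (1 : ℝ) ≤ |(n : ℝ)| := by exact_mod_cast Int.one_le_abs hn
    have hn2 : (n : ℝ) ^ 2 ≤ |(n : ℝ)| ^ (2 * N) := by
      rw [← sq_abs]; exact pow_le_pow_right₀ hn1 (by omega)
    have hnp : 0 < (n : ℝ) ^ 2 := by positivity
    rw [mul_one_div, le_div_iff₀ hnp, hB, div_pow, div_mul_eq_mul_div, le_div_iff₀ (by positivity)]
    refine le_trans ?_ h1
    rw [mul_pow _ |(n : ℝ)|]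
    calc _ = (2 * π) ^ (2 * N) * (n : ℝ) ^ 2 * ‖𝓕 g (n : ℝ)‖ := by ring
      _ ≤ _ := by gcongr
  have hs2 := hasSum_int_inv_sq
  have hbound : ∀ n : ℤ, ‖(if n = 0 then 0 else 𝓕 g (n : ℝ))‖ ≤ B * (1 / (n : ℝ) ^ 2) := by
    intro n
    split_ifs with hn
    · rw [norm_zero]; positivity
    · exact hFb n hn
  have hFs : Summable (fun n : ℤ => 𝓕 g (n : ℝ)) := by
    have h1 : Summable (fun n : ℤ => if n = 0 then 0 else 𝓕 g (n : ℝ)) :=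
      Summable.of_norm_bounded (hs2.mul_left B).summable hbound
    refine (summable_congr_cofinite ?_).1 h1
    filter_upwards [(Set.finite_singleton (0 : ℤ)).compl_mem_cofinite] with n hn
    exact if_neg hn
  have hP := Real.tsum_eq_tsum_fourier_of_rpow_decay_of_summable hgc.continuous one_lt_two hO hFs 0
  simp only [zero_add] at hP
  have hP' : ∑' n : ℤ, g n = ∑' n : ℤ, 𝓕 g (n : ℝ) := by
    rw [hP]
    refine tsum_congr fun n => ?_
    simp
  rw [hFs.tsum_eq_add_tsum_ite 0] at hP'
  have hz : 𝓕 g ((0 : ℤ) : ℝ) = ((h⁻¹ * ∫ s : ℝ, Real.exp (-x * Real.exp s + s) : ℝ) : ℂ) := by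
    rw [Real.fourier_real_eq_integral_exp_smul]
    simp only [Int.cast_zero, mul_zero, Complex.ofReal_zero, zero_mul, Complex.exp_zero, one_smul]
    rw [hgdef, integral_complex_ofReal,
      Measure.integral_comp_mul_left (fun s => Real.exp (-x * Real.exp s + s)) h,
      abs_of_pos (inv_pos.2 hh), smul_eq_mul]
  have hgs : ∑' n : ℤ, g n =
      ((∑' j : ℤ, Real.exp (-x * Real.exp (j * h) + j * h) : ℝ) : ℂ) := by
    rw [Complex.ofReal_tsum]
    refine tsum_congr fun n => ?_
    simp only [hgdef, mul_comm h]
  have hfin := tsum_of_norm_bounded (hs2.mul_left B) hbound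
  have hE : (∑' n : ℤ, if n = 0 then 0 else 𝓕 g (n : ℝ)) =
      ((∑' j : ℤ, Real.exp (-x * Real.exp (j * h) + j * h) -
        h⁻¹ * ∫ s : ℝ, Real.exp (-x * Real.exp s + s) : ℝ) : ℂ) := by
    rw [Complex.ofReal_sub, ← hgs, ← hz, hP']; ring
  rw [hE, Complex.norm_real, Real.norm_eq_abs] at hfin
  set S := ∑' j : ℤ, Real.exp (-x * Real.exp (j * h) + j * h)
  set J := ∫ s : ℝ, Real.exp (-x * Real.exp s + s)
  have e1 : |J - h * S| = h * |S - h⁻¹ * J| := by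
    rw [abs_sub_comm, ← abs_of_pos hh, ← abs_mul, abs_of_pos hh]
    congr 1
    field_simp
  have hpi : π ^ 2 / 3 ≤ 4 := by nlinarith [Real.pi_lt_d2, Real.pi_pos]
  rw [e1]
  calc h * |S - h⁻¹ * J| ≤ h * (B * 4) := by
        gcongr
        exact hfin.trans (by gcongr)
    _ = _ := by rw [hB]; field_simp
end

section
/- Let ε ∈ (0,1], set N := ⌈(1/2)·log(24/ε)⌉ and h := 2π/(e²·(2N+1)²). Then for every x > 0, |x⁻¹ − h·Σ_{j∈ℤ} e^{jh}·e^{−x·e^{jh}}| ≤ 8·e^{−2N}·x⁻¹ ≤ (ε/3)·x⁻¹. -/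
open Real


lemma gamma_sq (y : ℝ) (hy : 0 < y) :
    ‖Complex.Gamma (1 + y * Complex.I)‖ ^ 2 = π * y / Real.sinh (π * y) := by
  have hne : (y * Complex.I : ℂ) ≠ 0 := by simp [hy.ne']
  have h1 := Complex.Gamma_mul_Gamma_one_sub (y * Complex.I)
  have h2 := Complex.Gamma_add_one (y * Complex.I) hne
  have h3 : Complex.Gamma (1 - y * Complex.I) = (starRingEnd ℂ) (Complex.Gamma (1 + y * Complex.I)) := by
    rw [← Complex.Gamma_conj]; congr 1; simp [sub_eq_add_neg]
  have h4 : ‖Complex.Gamma (1 - y * Complex.I)‖ = ‖Complex.Gamma (1 + y * Complex.I)‖ := by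
    rw [h3, Complex.norm_conj]
  have h5 : ‖Complex.Gamma (1 + y * Complex.I)‖ = y * ‖Complex.Gamma (y * Complex.I)‖ := by
    rw [add_comm, h2]; simp [abs_of_pos hy]
  have h6 := congrArg norm h1
  rw [norm_mul, h4, ← mul_assoc, Complex.sin_mul_I, norm_div, norm_mul, Complex.norm_I, mul_one] at h6
  have h7 : Complex.sinh (π * y) = ((Real.sinh (π * y) : ℝ) : ℂ) := by push_cast; rfl
  rw [h7, Complex.norm_real, Complex.norm_real, Real.norm_of_nonneg pi_pos.le,
    Real.norm_of_nonneg (Real.sinh_nonneg_iff.2 (by positivity))] at h6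
  rw [sq]; nth_rw 1 [h5]; rw [mul_assoc, h6]; ring

lemma gamma_bound (y : ℝ) (hy : 1 ≤ y) :
    ‖Complex.Gamma (1 + y * Complex.I)‖ ≤ 3 * Real.exp (-y) := by
  refine (sq_le_sq₀ (norm_nonneg _) (by positivity)).1 ?_
  rw [gamma_sq y (by linarith)]
  have hs : Real.exp (3 * y) / 4 ≤ Real.sinh (π * y) := by
    have : Real.exp (3 * y) / 4 ≤ Real.sinh (3 * y) := by
      rw [Real.sinh_eq]
      have a : Real.exp (-(3 * y)) ≤ 1 := Real.exp_le_one_iff.2 (by linarith)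
      have b := Real.add_one_le_exp (3 * y)
      linarith
    exact this.trans (Real.sinh_le_sinh.2 (by nlinarith [pi_gt_three]))
  have he : y * 2 ≤ Real.exp y := by
    have := Real.add_one_le_exp (y - 1)
    have e1 := Real.add_one_le_exp (1 : ℝ)
    have : Real.exp y = Real.exp (y-1) * Real.exp 1 := by rw [← Real.exp_add]; congr 1; ring
    rw [this]; nlinarith
  have hE : Real.exp (3 * y) * (Real.exp (-y))^2 = Real.exp y := by
    rw [← Real.exp_nat_mul, ← Real.exp_add]; congr 1; push_cast; ring
  have hpos := Real.exp_pos (3 * y)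
  rw [div_le_iff₀ (lt_of_lt_of_le (by positivity) hs)]
  calc π * y ≤ 4 * y := by nlinarith [pi_le_four]
    _ ≤ 9 / 4 * Real.exp y := by linarith
    _ = (3 * Real.exp (-y))^2 * (Real.exp (3 * y) / 4) := by rw [← hE]; ring
    _ ≤ _ := by gcongr

lemma gamma_bound' (y : ℝ) (hy : 1 ≤ |y|) :
    ‖Complex.Gamma (1 + y * Complex.I)‖ ≤ 3 * Real.exp (-|y|) := by
  rcases le_or_gt 0 y with h | h
  · rw [abs_of_nonneg h] at *; exact gamma_bound y hy
  · rw [abs_of_neg h] at *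
    have := gamma_bound (-y) hy
    rw [← Complex.norm_conj, ← Complex.Gamma_conj]
    convert this using 4
    simp 

open FourierTransform in
lemma fourier_eq (x h : ℝ) (hx : 0 < x) (hh : 0 < h) (k : ℤ) :
    𝓕 (fun u : ℝ => ((Real.exp (-h * u) * Real.exp (-x * Real.exp (-h * u)) : ℝ) : ℂ)) (k : ℝ) =
    (h⁻¹ : ℝ) • ((1 / (x : ℂ)) ^ (1 + (2 * π / h * k : ℝ) * Complex.I : ℂ) *
      Complex.Gamma (1 + (2 * π / h * k : ℝ) * Complex.I)) := by
  have h1 := mellin_eq_fourier (fun t : ℝ => ((Real.exp (-x * t ^ h) : ℝ) : ℂ))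
    (s := (h + (2 * π * k : ℝ) * Complex.I : ℂ))
  have h2 := mellin_comp_rpow (fun t : ℝ => ((Real.exp (-x * t) : ℝ) : ℂ))
    (h + (2 * π * k : ℝ) * Complex.I : ℂ) h
  rw [h2] at h1
  have e1 : ((h + (2 * π * k : ℝ) * Complex.I : ℂ)).im / (2 * π) = k := by
    simp
  have e2 : ((h + (2 * π * k : ℝ) * Complex.I : ℂ)).re = h := by simp
  have e3 : (h + (2 * π * k : ℝ) * Complex.I : ℂ) / h = 1 + (2 * π / h * k : ℝ) * Complex.I := by
    have : (h : ℂ) ≠ 0 := by exact_mod_cast hh.ne'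
    push_cast; field_simp
  rw [e1, e2, e3, abs_of_pos hh] at h1
  have h3 := Complex.integral_cpow_mul_exp_neg_mul_Ioi
    (a := 1 + (2 * π / h * k : ℝ) * Complex.I) (r := x) (by simp) (by simpa)
  rw [← h3]
  have e4 : (fun u : ℝ => ((Real.exp (-h * u) * Real.exp (-x * Real.exp (-h * u)) : ℝ) : ℂ)) =
    fun u : ℝ => (Real.exp (-h * u)) • ((Real.exp (-x * (Real.exp (-u)) ^ h) : ℝ) : ℂ) := by
    ext u
    rw [← Real.exp_mul, Complex.real_smul]
    push_cast
    ring_nf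
  rw [e4, ← h1, mellin]
  simp

lemma decay (x h : ℝ) (hx : 0 < x) (hh : 0 < h) (u : ℝ) :
    Real.exp (-h * u) * Real.exp (-x * Real.exp (-h * u)) ≤ (1 + 2 / x ^ 2) * Real.exp (-h * |u|) := by
  have key : ∀ s : ℝ, 0 < s → Real.exp (-s) ≤ 2 / s ^ 2 := by
    intro s hs
    rw [Real.exp_neg, inv_eq_one_div, div_le_div_iff₀ (Real.exp_pos _) (by positivity)]
    have := Real.quadratic_le_exp_of_nonneg hs.le
    nlinarith
  have hE := Real.exp_pos (-h * |u|)
  have h2 : 0 < 2 / x ^ 2 := by positivity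
  rcases le_or_gt 0 u with hu | hu
  · rw [abs_of_nonneg hu] at *
    have : Real.exp (-x * Real.exp (-h * u)) ≤ 1 := Real.exp_le_one_iff.2 (by
      have := Real.exp_pos (-h * u); nlinarith)
    nlinarith
  · rw [abs_of_neg hu] at *
    have := key (x * Real.exp (-h * u)) (by positivity)
    rw [← neg_mul] at this
    have e : Real.exp (-h * -u) = (Real.exp (-h * u))⁻¹ := by rw [← Real.exp_neg]; congr 1; ring
    have hp := Real.exp_pos (-h * u)
    calc _ ≤ Real.exp (-h * u) * (2 / (x * Real.exp (-h * u)) ^ 2) := by gcongr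
      _ = 2 / x ^ 2 * Real.exp (-h * -u) := by rw [e]; field_simp
      _ ≤ _ := by nlinarith

open Asymptotics Filter in
lemma decayO (x h : ℝ) (hx : 0 < x) (hh : 0 < h) :
    (fun u : ℝ => ((Real.exp (-h * u) * Real.exp (-x * Real.exp (-h * u)) : ℝ) : ℂ))
      =O[cocompact ℝ] fun u : ℝ => |u| ^ (-2 : ℝ) := by
  apply IsBigO.of_bound ((1 + 2 / x ^ 2) * (2 / h ^ 2))
  have : ∀ᶠ u : ℝ in cocompact ℝ, u ≠ 0 := by
    filter_upwards [(isCompact_singleton (x := (0:ℝ))).compl_mem_cocompact] with u hu using hu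
  filter_upwards [this] with u hu
  have hu' := abs_pos.2 hu
  rw [Complex.norm_real, Real.norm_of_nonneg (by positivity), Real.norm_of_nonneg (by positivity)]
  refine (decay x h hx hh u).trans ?_
  rw [mul_assoc]
  gcongr
  rw [Real.rpow_neg hu'.le, neg_mul, Real.exp_neg]
  norm_cast
  have := Real.quadratic_le_exp_of_nonneg (mul_pos hh hu').le
  rw [← div_eq_mul_inv, div_div, inv_eq_one_div, div_le_div_iff₀ (Real.exp_pos _) (by positivity)]
  nlinarith [mul_pos hh hu']

lemma sum_bound (x h : ℝ) (hx : 0 < x) (hh : 0 < h) (hy : 2 ≤ 2 * π / h) :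
    |x⁻¹ - h * ∑' j : ℤ, Real.exp (j * h) * Real.exp (-x * Real.exp (j * h))| ≤
      8 * Real.exp (-(2 * π / h)) * x⁻¹ := by
  set y := 2 * π / h with hyd
  set G : ℤ → ℂ := fun k => (1 / (x : ℂ)) ^ (1 + (y * k : ℝ) * Complex.I : ℂ) *
      Complex.Gamma (1 + (y * k : ℝ) * Complex.I) with hG
  set r := Real.exp (-y) with hr
  have hr0 : 0 < r := Real.exp_pos _
  have hr1 : r ≤ 1 / 4 := by
    have := Real.quadratic_le_exp_of_nonneg (show (0:ℝ) ≤ y by linarith)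
    rw [hr, Real.exp_neg, inv_eq_one_div]
    apply one_div_le_one_div_of_le (by norm_num); nlinarith
  have hnorm : ∀ k : ℤ, k ≠ 0 → ‖G k‖ ≤ x⁻¹ * (3 * r ^ k.natAbs) := by
    intro k hk
    have hk1 : (1:ℝ) ≤ |(k:ℝ)| := by exact_mod_cast Int.one_le_abs hk
    have hab : |y * k| = y * |(k:ℝ)| := by rw [abs_mul, abs_of_pos (by linarith : 0 < y)]
    have h1 := gamma_bound' (y * k) (by rw [hab]; nlinarith)
    have h2 : ‖(1 / (x : ℂ)) ^ (1 + (y * k : ℝ) * Complex.I : ℂ)‖ = x⁻¹ := by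
      have : (1 / (x:ℂ)) = ((x⁻¹ : ℝ) : ℂ) := by push_cast; simp
      rw [this, Complex.norm_cpow_eq_rpow_re_of_pos (by positivity)]
      simp
    simp only [hG]
    rw [norm_mul, h2]
    gcongr
    refine h1.trans_eq ?_
    rw [hr, ← Real.exp_nat_mul, hab]
    congr 2
    rw [Nat.cast_natAbs]; push_cast; ring
  have hG0 : G 0 = x⁻¹ := by simp [hG]
  -- geometric majorant
  have hgeo : HasSum (fun n : ℕ => x⁻¹ * (3 * r ^ (n + 1))) (x⁻¹ * (3 * (r * (1 - r)⁻¹))) := by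
    have := ((hasSum_geometric_of_lt_one hr0.le (by linarith)).mul_left r).mul_left 3 |>.mul_left x⁻¹
    simpa [pow_succ'] using this
  have b1 : ∀ n : ℕ, ‖G (n + 1)‖ ≤ x⁻¹ * (3 * r ^ (n + 1)) := by
    intro n; convert hnorm (n + 1) (by omega) using 4; omega
  have b2 : ∀ n : ℕ, ‖G (-(n + 1))‖ ≤ x⁻¹ * (3 * r ^ (n + 1)) := by
    intro n; convert hnorm (-(n + 1)) (by omega) using 4; omega
  have s1 : Summable fun n : ℕ => G (n + 1) := Summable.of_norm_bounded hgeo.summable b1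
  have s2 : Summable fun n : ℕ => G (-(n + 1)) := Summable.of_norm_bounded hgeo.summable b2
  have hsum : Summable G := Summable.of_add_one_of_neg_add_one s1 s2
  have htot := tsum_of_add_one_of_neg_add_one s1 s2
  have n1 := tsum_of_norm_bounded hgeo b1
  have n2 := tsum_of_norm_bounded hgeo b2
  -- Poisson
  have hF := fourier_eq x h hx hh
  have hP := Real.tsum_eq_tsum_fourier_of_rpow_decay_of_summable
    (f := fun u : ℝ => ((Real.exp (-h * u) * Real.exp (-x * Real.exp (-h * u)) : ℝ) : ℂ))
    (by fun_prop) (b := 2) (by norm_num) (decayO x h hx hh)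
    (by simp_rw [hF]; exact hsum.const_smul _) 0
  simp_rw [hF] at hP
  have hP2 : (h : ℂ) * ((∑' j : ℤ, Real.exp (j * h) * Real.exp (-x * Real.exp (j * h)) : ℝ) : ℂ)
      = ∑' k, G k := by
    rw [← (Equiv.neg ℤ).tsum_eq, Complex.ofReal_tsum]
    have hc : (h : ℂ) ≠ 0 := by exact_mod_cast hh.ne'
    have e : ∑' k, G k = h * ∑' k, (h⁻¹ : ℝ) • G k := by
      rw [tsum_const_smul'', Complex.real_smul]; push_cast; field_simp
    rw [e]
    congr 1
    convert hP using 1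
    · congr 1; ext j; simp [mul_comm]
    · simp [hG, hyd]
  have hdiff : ((x⁻¹ - h * ∑' j : ℤ, Real.exp (j * h) * Real.exp (-x * Real.exp (j * h)) : ℝ) : ℂ)
      = -(∑' n : ℕ, G (n + 1)) - ∑' n : ℕ, G (-(n + 1)) := by
    rw [Complex.ofReal_sub, Complex.ofReal_mul, hP2, htot, hG0]; push_cast; ring
  rw [← Real.norm_eq_abs, ← Complex.norm_real, hdiff]
  refine (norm_sub_le _ _).trans ?_
  rw [norm_neg]
  have hinv : (1 - r)⁻¹ ≤ 4 / 3 := by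
    rw [inv_le_comm₀ (by linarith) (by norm_num)]; norm_num; linarith
  calc _ ≤ x⁻¹ * (3 * (r * (1 - r)⁻¹)) + x⁻¹ * (3 * (r * (1 - r)⁻¹)) := add_le_add n1 n2
    _ ≤ x⁻¹ * (3 * (r * (4/3))) + x⁻¹ * (3 * (r * (4/3))) := by gcongr
    _ = _ := by ring

theorem inverse_eq_infinite_sum_exponentials (ε : ℝ) (hε : ε ∈ Set.Ioc (0 : ℝ) 1)
    (N : ℤ) (hN : N = ⌈Real.log (24 / ε) / 2⌉)
    (h : ℝ) (hh : h = 2 * π / (Real.exp 1 ^ 2 * (2 * (N : ℝ) + 1) ^ 2))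
    (x : ℝ) (hx : 0 < x) :
    |x⁻¹ - h * ∑' j : ℤ, Real.exp (j * h) * Real.exp (-x * Real.exp (j * h))| ≤
      8 * Real.exp (-(2 * (N : ℝ))) * x⁻¹ ∧
    8 * Real.exp (-(2 * (N : ℝ))) * x⁻¹ ≤ ε / 3 * x⁻¹ := by
  obtain ⟨h0, h1⟩ := hε
  have hle : Real.log (24 / ε) / 2 ≤ N := by rw [hN]; exact Int.le_ceil _
  have h24 : 1 < 24 / ε := by rw [lt_div_iff₀ h0]; linarith
  have hNpos : (0:ℝ) < N := lt_of_lt_of_le (by have := Real.log_pos h24; linarith) hle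
  have hN1 : (1:ℝ) ≤ N := by
    have : 0 < N := by exact_mod_cast hNpos
    exact_mod_cast this
  have he : 1 ≤ Real.exp 1 ^ 2 := one_le_pow₀ (Real.one_le_exp (by norm_num))
  have hhpos : 0 < h := by rw [hh]; positivity
  have hy : 2 * π / h = Real.exp 1 ^ 2 * (2 * (N : ℝ) + 1) ^ 2 := by
    rw [hh]; field_simp
  have hy2 : 2 * (N:ℝ) ≤ 2 * π / h := by
    rw [hy]; nlinarith
  constructor
  · refine (sum_bound x h hx hhpos (by linarith)).trans ?_
    gcongr
  · gcongr
    have : Real.exp (-(2 * (N : ℝ))) ≤ ε / 24 := by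
      rw [← Real.le_log_iff_exp_le (by positivity)]
      have : Real.log (ε / 24) = - Real.log (24 / ε) := by rw [← Real.log_inv, inv_div]
      linarith
    linarith
end

section
/- Let ε ∈ (0,1], h > 0, and set A := ⌊−(1/h)·log(3/ε)⌋. Then for every x ∈ (0,1], h·Σ_{j<A, j∈ℤ} e^{jh}·e^{−x·e^{jh}} ≤ x⁻¹·(1 − e^{−x·e^{Ah}}) ≤ (ε/3)·x⁻¹. -/
open Real


lemma aux_mono (a b : ℝ) (ha : 0 ≤ a) (hab : a ≤ b) (hb : b ≤ 1) :
    a * Real.exp (-a) ≤ b * Real.exp (-b) := by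
  have h1 : Real.exp (-b) = Real.exp (-a) * Real.exp (-(b - a)) := by
    rw [← Real.exp_add]; congr 1; ring
  have h2 := Real.add_one_le_exp (-(b - a))
  have h3 : a ≤ b * Real.exp (-(b - a)) := by
    have : b * (-(b - a) + 1) ≤ b * Real.exp (-(b - a)) :=
      mul_le_mul_of_nonneg_left h2 (ha.trans hab)
    nlinarith [mul_nonneg (sub_nonneg.2 hab) (sub_nonneg.2 hb)]
  rw [h1]
  have := mul_le_mul_of_nonneg_left h3 (Real.exp_pos (-a)).le
  linarith

lemma aux_step (x t h : ℝ) (hx : 0 < x) (hh : 0 < h) (hb : x * Real.exp (t + h) ≤ 1) :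
    h * (Real.exp t * Real.exp (-x * Real.exp t)) ≤
      x⁻¹ * (Real.exp (-x * Real.exp t) - Real.exp (-x * Real.exp (t + h))) := by
  have hd : ∀ s : ℝ, HasDerivAt (fun s => Real.exp (-x * Real.exp s))
      (Real.exp (-x * Real.exp s) * (-x * Real.exp s)) s := fun s =>
    ((Real.hasDerivAt_exp s).const_mul (-x)).exp
  obtain ⟨c, hc, hc'⟩ := exists_hasDerivAt_eq_slope _ _ (show t < t + h by linarith)
    (fun s _ => (hd s).continuousAt.continuousWithinAt) (fun s _ => hd s)
  have hm := aux_mono (x * Real.exp t) (x * Real.exp c) (by positivity)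
    (mul_le_mul_of_nonneg_left (Real.exp_le_exp.2 hc.1.le) hx.le)
    ((mul_le_mul_of_nonneg_left (Real.exp_le_exp.2 hc.2.le) hx.le).trans hb)
  rw [eq_div_iff (by linarith)] at hc'
  rw [le_inv_mul_iff₀ hx]
  simp only [← neg_mul] at hm
  have := mul_le_mul_of_nonneg_left hm hh.le
  linarith

def auxEquiv (A : ℤ) : ℕ ≃ {j : ℤ // j < A} where
  toFun n := ⟨A - 1 - n, by omega⟩
  invFun j := (A - 1 - j.1).toNat
  left_inv n := by simp
  right_inv j := by
    have := j.2
    ext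
    simp only
    omega

/-- **Equation (8): bounding the lower tail.** With `A = ⌊-(1/h) log (3/ε)⌋`, for every
`x ∈ (0,1]`,
`h ∑_{j < A} e^{jh} e^{-x e^{jh}} ≤ x⁻¹ (1 - e^{-x e^{Ah}}) ≤ (ε/3) x⁻¹`
(and the tail sum converges). -/
theorem lower_tail_bound (ε : ℝ) (hε : ε ∈ Set.Ioc (0 : ℝ) 1) (h : ℝ) (hh : 0 < h)
    (A : ℤ) (hA : A = ⌊-(1 / h) * Real.log (3 / ε)⌋)
    (x : ℝ) (hx : x ∈ Set.Ioc (0 : ℝ) 1) :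
    Summable (fun j : {j : ℤ // j < A} =>
      Real.exp ((j : ℤ) * h) * Real.exp (-x * Real.exp ((j : ℤ) * h))) ∧
    h * ∑' j : {j : ℤ // j < A},
        Real.exp ((j : ℤ) * h) * Real.exp (-x * Real.exp ((j : ℤ) * h)) ≤
      x⁻¹ * (1 - Real.exp (-x * Real.exp (A * h))) ∧
    x⁻¹ * (1 - Real.exp (-x * Real.exp (A * h))) ≤ ε / 3 * x⁻¹ := by
  obtain ⟨hε0, hε1⟩ := hε
  obtain ⟨hx0, hx1⟩ := hx
  have hAe : Real.exp (A * h) ≤ ε / 3 := by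
    have h1 : (A : ℝ) ≤ -(1 / h) * Real.log (3 / ε) := by rw [hA]; exact Int.floor_le _
    have h2 : (A : ℝ) * h ≤ Real.log (ε / 3) := by
      have h3 := mul_le_mul_of_nonneg_right h1 hh.le
      have h4 : -(1 / h) * Real.log (3 / ε) * h = Real.log (ε / 3) := by
        rw [← inv_div ε 3, Real.log_inv]; field_simp
      linarith
    calc Real.exp (A * h) ≤ Real.exp (Real.log (ε / 3)) := Real.exp_le_exp.2 h2
      _ = ε / 3 := Real.exp_log (by positivity)
  clear hA
  have hpos := Real.exp_pos (A * h)
  have hxA : x * Real.exp (A * h) ≤ ε / 3 := by nlinarith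
  set f : {j : ℤ // j < A} → ℝ := fun j =>
      Real.exp ((j : ℤ) * h) * Real.exp (-x * Real.exp ((j : ℤ) * h)) with hf
  have hf0 : ∀ n, 0 ≤ f (auxEquiv A n) := fun n => by simp only [hf]; positivity
  have hpart : ∀ n : ℕ, h * ∑ i ∈ Finset.range n, f (auxEquiv A i) ≤
      x⁻¹ * (Real.exp (-x * Real.exp ((A - n : ℝ) * h)) - Real.exp (-x * Real.exp (A * h))) := by
    intro n
    induction n with
    | zero => simp
    | succ n ih =>
      rw [Finset.sum_range_succ, mul_add]
      have e : (A - (n + 1 : ℕ) : ℝ) * h + h = (A - n : ℝ) * h := by push_cast; ring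
      have hs := aux_step x ((A - (n + 1 : ℕ) : ℝ) * h) h hx0 hh (by
        rw [e]
        have : Real.exp ((A - n : ℝ) * h) ≤ Real.exp (A * h) := by
          apply Real.exp_le_exp.2
          apply mul_le_mul_of_nonneg_right _ hh.le
          have : (0 : ℝ) ≤ n := n.cast_nonneg
          linarith
        have := mul_le_mul_of_nonneg_left this hx0.le
        linarith)
      rw [e] at hs
      have e2 : f (auxEquiv A n) = Real.exp ((A - (n + 1 : ℕ) : ℝ) * h) *
          Real.exp (-x * Real.exp ((A - (n + 1 : ℕ) : ℝ) * h)) := by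
        have : (((auxEquiv A n : {j : ℤ // j < A}) : ℤ) : ℝ) = A - (n + 1 : ℕ) := by
          simp only [auxEquiv, Equiv.coe_fn_mk]; push_cast; ring
        simp only [hf, this]
      rw [e2]
      linarith
  have hb : ∀ n : ℕ, ∑ i ∈ Finset.range n, f (auxEquiv A i) ≤
      h⁻¹ * (x⁻¹ * (1 - Real.exp (-x * Real.exp (A * h)))) := by
    intro n
    rw [le_inv_mul_iff₀ hh]
    refine (hpart n).trans (mul_le_mul_of_nonneg_left ?_ (by positivity))
    have : Real.exp (-x * Real.exp ((A - n : ℝ) * h)) ≤ 1 := by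
      rw [Real.exp_le_one_iff]
      have : 0 < x * Real.exp ((A - n : ℝ) * h) := by positivity
      linarith
    linarith
  refine ⟨(auxEquiv A).summable_iff.1 (summable_of_sum_range_le hf0 hb), ?_, ?_⟩
  · rw [← le_inv_mul_iff₀ hh, ← (auxEquiv A).tsum_eq f]
    exact Real.tsum_le_of_sum_range_le hf0 hb
  · rw [mul_comm (ε / 3)]
    apply mul_le_mul_of_nonneg_left _ (by positivity)
    have := Real.add_one_le_exp (-x * Real.exp (A * h))
    linarith
end

section
/- Let ε ∈ (0,1], δ ∈ (0,1], h > 0, and set B := ⌈(1/h)·log((1/δ)·log(3/ε))⌉. Then for every x ∈ [δ,1], h·Σ_{j>B, j∈ℤ} e^{jh}·e^{−x·e^{jh}} ≤ x⁻¹·e^{−x·e^{Bh}} ≤ (ε/3)·x⁻¹. -/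
open Real

theorem step_aux (x t h : ℝ) (hx : 0 < x) (hh : 0 < h) (ht : 1 ≤ x * Real.exp t) :
    h * (Real.exp (t + h) * Real.exp (-x * Real.exp (t + h))) ≤
      x⁻¹ * Real.exp (-x * Real.exp t) - x⁻¹ * Real.exp (-x * Real.exp (t + h)) := by
  have hd : ∀ s : ℝ, HasDerivAt (fun s => x⁻¹ * Real.exp (-x * Real.exp s))
      (x⁻¹ * (Real.exp (-x * Real.exp s) * (-x * Real.exp s))) s := fun s =>
    (((Real.hasDerivAt_exp s).const_mul (-x)).exp).const_mul _
  obtain ⟨c, hc, hc2⟩ := exists_hasDerivAt_eq_slope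
    (fun s => x⁻¹ * Real.exp (-x * Real.exp s))
    (fun s => x⁻¹ * (Real.exp (-x * Real.exp s) * (-x * Real.exp s)))
    (show t < t + h by linarith) (fun s _ => (hd s).continuousAt.continuousWithinAt)
    (fun s _ => hd s)
  have e1 : x⁻¹ * (Real.exp (-x * Real.exp c) * (-x * Real.exp c)) =
      -(Real.exp c * Real.exp (-x * Real.exp c)) := by
    field_simp
  simp only [add_sub_cancel_left] at hc2
  rw [e1, eq_div_iff hh.ne'] at hc2
  have key : Real.exp (t + h) * Real.exp (-x * Real.exp (t + h)) ≤
      Real.exp c * Real.exp (-x * Real.exp c) := by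
    rw [← Real.exp_add, ← Real.exp_add, Real.exp_le_exp]
    have h1 : 1 ≤ x * Real.exp c :=
      ht.trans (mul_le_mul_of_nonneg_left (Real.exp_le_exp.2 hc.1.le) hx.le)
    have h2 := Real.add_one_le_exp (t + h - c)
    have h3 : Real.exp (t + h) = Real.exp c * Real.exp (t + h - c) := by
      rw [← Real.exp_add]; ring_nf
    have h4 : 0 < t + h - c := by linarith [hc.2]
    rw [h3]
    nlinarith [mul_nonneg (sub_nonneg.2 h1) (show 0 ≤ Real.exp (t + h - c) - 1 by linarith)]
  nlinarith [mul_le_mul_of_nonneg_left key hh.le]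

def shiftEquiv (B : ℤ) : ℕ ≃ {j : ℤ // B < j} where
  toFun n := ⟨B + 1 + n, by omega⟩
  invFun j := (j.1 - B - 1).toNat
  left_inv n := by simp only; omega
  right_inv j := by
    have := j.2
    apply Subtype.ext
    simp only
    omega

/-- **Equation (9): bounding the upper tail.** With `B = ⌈(1/h) log ((1/δ) log (3/ε))⌉`,
for every `x ∈ [δ,1]`,
`h ∑_{j > B} e^{jh} e^{-x e^{jh}} ≤ x⁻¹ e^{-x e^{Bh}} ≤ (ε/3) x⁻¹`
(and the tail sum converges). -/
theorem upper_tail_bound (ε δ : ℝ) (hε : ε ∈ Set.Ioc (0 : ℝ) 1)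
    (hδ : δ ∈ Set.Ioc (0 : ℝ) 1) (h : ℝ) (hh : 0 < h)
    (B : ℤ) (hB : B = ⌈(1 / h) * Real.log ((1 / δ) * Real.log (3 / ε))⌉)
    (x : ℝ) (hx : x ∈ Set.Icc δ 1) :
    Summable (fun j : {j : ℤ // B < j} =>
      Real.exp ((j : ℤ) * h) * Real.exp (-x * Real.exp ((j : ℤ) * h))) ∧
    h * ∑' j : {j : ℤ // B < j},
        Real.exp ((j : ℤ) * h) * Real.exp (-x * Real.exp ((j : ℤ) * h)) ≤
      x⁻¹ * Real.exp (-x * Real.exp (B * h)) ∧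
    x⁻¹ * Real.exp (-x * Real.exp (B * h)) ≤ ε / 3 * x⁻¹ := by
  obtain ⟨hε0, hε1⟩ := hε
  obtain ⟨hδ0, hδ1⟩ := hδ
  obtain ⟨hx0, hx1⟩ := hx
  have hxp : 0 < x := hδ0.trans_le hx0
  have h3 : 3 ≤ 3 / ε := by rw [le_div_iff₀ hε0]; linarith
  have hL : 1 ≤ Real.log (3 / ε) := by
    rw [Real.le_log_iff_exp_le (by linarith)]
    linarith [Real.exp_one_lt_d9]
  have hBh : Real.log ((1 / δ) * Real.log (3 / ε)) ≤ B * h := by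
    have := Int.le_ceil ((1 / h) * Real.log ((1 / δ) * Real.log (3 / ε)))
    rw [← hB, one_div_mul_eq_div, div_le_iff₀ hh] at this
    exact this
  rw [Real.log_le_iff_le_exp (by positivity), one_div_mul_eq_div, div_le_iff₀ hδ0] at hBh
  have hxB : Real.log (3 / ε) ≤ x * Real.exp (B * h) := by
    nlinarith [Real.exp_pos (B * h)]
  have hnn : ∀ n : ℕ, 0 ≤ Real.exp (((B + 1 + n : ℤ) : ℝ) * h) *
      Real.exp (-x * Real.exp (((B + 1 + n : ℤ) : ℝ) * h)) := fun n => by positivity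
  have hps : ∀ n : ℕ, h * ∑ i ∈ Finset.range n, Real.exp (((B + 1 + i : ℤ) : ℝ) * h) *
      Real.exp (-x * Real.exp (((B + 1 + i : ℤ) : ℝ) * h)) ≤
      x⁻¹ * Real.exp (-x * Real.exp (B * h)) -
        x⁻¹ * Real.exp (-x * Real.exp ((B + n) * h)) := by
    intro n
    induction n with
    | zero => simp
    | succ n ih =>
      rw [Finset.sum_range_succ, mul_add]
      have h1 : 1 ≤ x * Real.exp ((B + n) * h) := by
        refine (hL.trans hxB).trans (mul_le_mul_of_nonneg_left (Real.exp_le_exp.2 ?_) hxp.le)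
        have : 0 ≤ (n : ℝ) * h := by positivity
        linarith
      have := step_aux x ((B + n) * h) h hxp hh h1
      have e : (B + n) * h + h = ((B + 1 + n : ℤ) : ℝ) * h := by push_cast; ring
      have e' : ((B : ℝ) + (n + 1 : ℕ)) * h = ((B + 1 + n : ℤ) : ℝ) * h := by push_cast; ring
      rw [e] at this
      rw [e']
      linarith
  have hps2 : ∀ n : ℕ, ∑ i ∈ Finset.range n, Real.exp (((B + 1 + i : ℤ) : ℝ) * h) *
      Real.exp (-x * Real.exp (((B + 1 + i : ℤ) : ℝ) * h)) ≤
      (x⁻¹ * Real.exp (-x * Real.exp (B * h))) / h := by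
    intro n
    rw [le_div_iff₀ hh, mul_comm]
    have : 0 ≤ x⁻¹ * Real.exp (-x * Real.exp ((B + n) * h)) := by positivity
    linarith [hps n]
  refine ⟨?_, ?_, ?_⟩
  · rw [← (shiftEquiv B).summable_iff]
    exact summable_of_sum_range_le hnn hps2
  · rw [← (shiftEquiv B).tsum_eq]
    have := Real.tsum_le_of_sum_range_le hnn hps2
    rw [le_div_iff₀ hh, mul_comm] at this
    exact this
  · rw [mul_comm]
    refine mul_le_mul_of_nonneg_right ?_ (by positivity)
    calc Real.exp (-x * Real.exp (B * h)) ≤ Real.exp (-Real.log (3 / ε)) :=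
          Real.exp_le_exp.2 (by linarith)
      _ = ε / 3 := by rw [Real.exp_neg, Real.exp_log (by linarith), inv_div]
end

section
/- Let ε, δ ∈ (0,1]. Set N := ⌈(1/2)·log(24/ε)⌉, h := 2π/(e²·(2N+1)²), A := ⌊−(1/h)·log(3/ε)⌋, and B := ⌈(1/h)·log((1/δ)·log(3/ε))⌉. Then for every x ∈ [δ,1], |x⁻¹ − h·Σ_{j=A}^{B} e^{jh}·e^{−x·e^{jh}}| ≤ ε·x⁻¹; equivalently, (1−ε)·x⁻¹ ≤ Σ_{j=A}^{B} h·e^{jh}·e^{−x·e^{jh}} ≤ (1+ε)·x⁻¹. -/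
open Real

lemma aux_gamma_pos (y : ℝ) (hy : 0 < y) :
    ‖Complex.Gamma (1 + y * Complex.I)‖ ≤ 2 * Real.exp (-(π * y / 4)) := by
  have hyI : (y * Complex.I : ℂ) ≠ 0 := by simp [hy.ne']
  have h1 : Complex.Gamma (1 + y * Complex.I) * Complex.Gamma (1 - y * Complex.I)
      = ((π * y / Real.sinh (π * y) : ℝ) : ℂ) := by
    rw [add_comm, Complex.Gamma_add_one _ hyI, mul_assoc, Complex.Gamma_mul_Gamma_one_sub,
      ← mul_assoc, Complex.sin_mul_I]
    push_cast
    have hs : Complex.sinh (π * y) ≠ 0 := by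
      have : Real.sinh (π * y) ≠ 0 := by
        rw [Ne, Real.sinh_eq_zero]; positivity
      exact_mod_cast this
    have := Complex.I_ne_zero
    field_simp
  have h2 : Complex.Gamma (1 - y * Complex.I)
      = (starRingEnd ℂ) (Complex.Gamma (1 + y * Complex.I)) := by
    rw [← Complex.Gamma_conj]; simp [sub_eq_add_neg]
  have h3 : ‖Complex.Gamma (1 + y * Complex.I)‖ ^ 2 = π * y / Real.sinh (π * y) := by
    rw [h2, Complex.mul_conj, Complex.normSq_eq_norm_sq] at h1
    exact_mod_cast h1
  have hz : 0 < π * y := by positivity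
  set z := π * y with hzdef
  have h4 : z * Real.exp (z / 2) / 2 ≤ Real.sinh z := by
    have e1 : Real.sinh z = 2 * Real.sinh (z / 2) * Real.cosh (z / 2) := by
      rw [← Real.sinh_two_mul]; ring_nf
    have e2 : z / 2 ≤ Real.sinh (z / 2) := Real.self_le_sinh_iff.2 (by positivity)
    have e3 : Real.exp (z / 2) / 2 ≤ Real.cosh (z / 2) := by
      rw [Real.cosh_eq]; have := Real.exp_pos (-(z/2)); linarith
    have e4 := mul_le_mul e2 e3 (by positivity) (by linarith)
    rw [e1]; nlinarith
  have hsp : 0 < Real.sinh z := Real.sinh_pos_iff.2 hz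
  have h5 : z / Real.sinh z ≤ (2 * Real.exp (-(z / 4))) ^ 2 := by
    rw [div_le_iff₀ hsp]
    have e5 : Real.exp (-(z / 4)) ^ 2 * Real.exp (z / 2) = 1 := by
      rw [← Real.exp_nat_mul, ← Real.exp_add]; simp; ring
    have : 0 < Real.exp (-(z / 4)) ^ 2 := by positivity
    calc z ≤ 2 * z := by linarith
      _ = 4 * (Real.exp (-(z / 4)) ^ 2) * (z * Real.exp (z / 2) / 2) := by
        linear_combination (-2 * z) * e5
      _ ≤ 4 * (Real.exp (-(z / 4)) ^ 2) * Real.sinh z := by gcongr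
      _ = _ := by ring
  rw [← h3] at h5
  exact le_of_sq_le_sq h5 (by positivity)

lemma aux_gamma (y : ℝ) :
    ‖Complex.Gamma (1 + y * Complex.I)‖ ≤ 2 * Real.exp (-(π * |y| / 4)) := by
  rcases lt_trichotomy y 0 with hy | hy | hy
  · have := aux_gamma_pos (-y) (by linarith)
    have h2 : Complex.Gamma (1 + (-y : ℝ) * Complex.I)
      = (starRingEnd ℂ) (Complex.Gamma (1 + y * Complex.I)) := by
      rw [← Complex.Gamma_conj]; simp
    rw [h2, Complex.norm_conj] at this
    rwa [abs_of_neg hy]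
  · subst hy; simp
  · rw [abs_of_pos hy]; exact aux_gamma_pos y hy

open scoped FourierTransform

lemma aux_fourier (x : ℝ) (hx : 0 < x) (w : ℝ) :
    𝓕 (fun u : ℝ => ((Real.exp (-u) * Real.exp (-x * Real.exp (-u)) : ℝ) : ℂ)) w
      = (1 / (x : ℂ)) ^ (1 + (2 * π * w : ℝ) * Complex.I) *
        Complex.Gamma (1 + (2 * π * w : ℝ) * Complex.I) := by
  have h1 := mellin_eq_fourier (fun t : ℝ => ((Real.exp (-x * t) : ℝ) : ℂ))
    (s := 1 + (2 * π * w : ℝ) * Complex.I)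
  have h2 := Complex.integral_cpow_mul_exp_neg_mul_Ioi (a := 1 + (2 * π * w : ℝ) * Complex.I)
    (r := x) (by simp) (by simpa using hx)
  rw [← h2]
  have e1 : (1 + (2 * π * w : ℝ) * Complex.I).im / (2 * π) = w := by
    simp
  have e2 : (1 + (2 * π * w : ℝ) * Complex.I).re = 1 := by simp
  rw [e1, e2] at h1
  convert h1.symm using 1
  · have : (fun u : ℝ => ((Real.exp (-u) * Real.exp (-x * Real.exp (-u)) : ℝ) : ℂ)) =
        fun u : ℝ => Real.exp (-1 * u) • ((Real.exp (-x * Real.exp (-u)) : ℝ) : ℂ) := by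
      ext u
      simp
    rw [this]
  · rw [mellin]
    apply MeasureTheory.integral_congr_ae
    filter_upwards with u
    simp

lemma aux_fourier_scale (x h : ℝ) (hx : 0 < x) (hh : 0 < h) (w : ℝ) :
    𝓕 (fun u : ℝ => ((Real.exp (-(h * u)) * Real.exp (-x * Real.exp (-(h * u))) : ℝ) : ℂ)) w
      = (h : ℂ)⁻¹ * ((1 / (x : ℂ)) ^ (1 + (2 * π * (w / h) : ℝ) * Complex.I) *
        Complex.Gamma (1 + (2 * π * (w / h) : ℝ) * Complex.I)) := by
  rw [← aux_fourier x hx, Real.fourier_eq', Real.fourier_eq']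
  have := MeasureTheory.Measure.integral_comp_mul_left (fun v : ℝ =>
    Complex.exp (((-2 * π * inner ℝ v (w / h) : ℝ) : ℂ) * Complex.I) •
      ((Real.exp (-v) * Real.exp (-x * Real.exp (-v)) : ℝ) : ℂ)) h
  rw [abs_of_pos (inv_pos.2 hh)] at this
  simp only [Complex.real_smul, Complex.ofReal_inv] at this
  rw [← this]
  congr 1
  ext u
  have : inner ℝ (h * u) (w / h) = inner ℝ u w := by
    simp; field_simp
  rw [this]

lemma aux_fourier_norm (x h : ℝ) (hx : 0 < x) (hh : 0 < h) (w : ℝ) :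
    ‖𝓕 (fun u : ℝ => ((Real.exp (-(h * u)) * Real.exp (-x * Real.exp (-(h * u))) : ℝ) : ℂ)) w‖
      ≤ h⁻¹ * x⁻¹ * (2 * Real.exp (-(π ^ 2 / (2 * h) * |w|))) := by
  rw [aux_fourier_scale x h hx hh, norm_mul, norm_mul]
  have e : (1 / (x : ℂ)) = ((x⁻¹ : ℝ) : ℂ) := by simp
  rw [e, Complex.norm_cpow_eq_rpow_re_of_pos (inv_pos.2 hx)]
  have := aux_gamma (2 * π * (w / h))
  have e2 : π * |2 * π * (w / h)| / 4 = π ^ 2 / (2 * h) * |w| := by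
    rw [abs_mul, abs_div, abs_of_pos hh, abs_of_pos (by positivity : 0 < 2 * π)]
    ring
  rw [e2] at this
  have e3 : ‖(h : ℂ)⁻¹‖ = h⁻¹ := by simp [abs_of_pos hh]
  rw [e3]
  simp only [Complex.add_re, Complex.one_re, Complex.mul_re, Complex.ofReal_re, Complex.I_re,
    Complex.ofReal_im, Complex.I_im, mul_zero, zero_mul, sub_zero, add_zero, Real.rpow_one]
  rw [mul_assoc h⁻¹]
  exact mul_le_mul_of_nonneg_left (mul_le_mul_of_nonneg_left this (inv_pos.2 hx).le)
    (inv_pos.2 hh).le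

lemma aux_fourier_zero (x h : ℝ) (hx : 0 < x) (hh : 0 < h) :
    𝓕 (fun u : ℝ => ((Real.exp (-(h * u)) * Real.exp (-x * Real.exp (-(h * u))) : ℝ) : ℂ)) 0
      = (h : ℂ)⁻¹ * (x : ℂ)⁻¹ := by
  rw [aux_fourier_scale x h hx hh]; simp

lemma aux_decay (x : ℝ) (hx : 0 < x) (v : ℝ) :
    Real.exp (-v) * Real.exp (-x * Real.exp (-v)) ≤ (1 + 2 / x ^ 2) * Real.exp (-|v|) := by
  have hp : 0 < 2 / x ^ 2 := by positivity
  rcases le_total 0 v with hv | hv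
  · rw [abs_of_nonneg hv]
    have h1 : Real.exp (-x * Real.exp (-v)) ≤ 1 := by
      rw [Real.exp_le_one_iff]; have := mul_pos hx (Real.exp_pos (-v)); linarith
    have := Real.exp_pos (-v)
    nlinarith [mul_pos hp this]
  · rw [abs_of_nonpos hv, neg_neg]
    have hE := Real.exp_pos (-v)
    have e1 : Real.exp v * Real.exp (-v) = 1 := by rw [← Real.exp_add]; simp
    set E := Real.exp (-v)
    have h1 : (x * E) ^ 2 / 2 ≤ Real.exp (x * E) := by
      have := Real.quadratic_le_exp_of_nonneg (mul_pos hx hE).le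
      have := mul_pos hx hE
      linarith
    have h2 : Real.exp (-x * E) ≤ 2 / (x * E) ^ 2 := by
      rw [neg_mul, Real.exp_neg, inv_le_comm₀ (Real.exp_pos _) (by positivity), inv_div]
      exact h1
    have e2 : Real.exp v = E⁻¹ := by field_simp; linarith
    calc E * Real.exp (-x * E) ≤ E * (2 / (x * E) ^ 2) := by gcongr
      _ = 2 / x ^ 2 * E⁻¹ := by field_simp
      _ ≤ (1 + 2 / x ^ 2) * Real.exp v := by rw [e2]; gcongr; linarith

lemma aux_isBigO (x h : ℝ) (hx : 0 < x) (hh : 0 < h) :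
    (fun u : ℝ => ((Real.exp (-(h * u)) * Real.exp (-x * Real.exp (-(h * u))) : ℝ) : ℂ))
      =O[Filter.cocompact ℝ] (fun u : ℝ => |u| ^ (-2 : ℝ)) := by
  apply Asymptotics.IsBigO.of_bound ((1 + 2 / x ^ 2) * (2 / h ^ 2))
  have : ∀ᶠ u : ℝ in Filter.cocompact ℝ, u ≠ 0 := by
    have := (Set.finite_singleton (0:ℝ)).isCompact.compl_mem_cocompact
    filter_upwards [this] with u hu using hu
  filter_upwards [this] with u hu
  rw [Complex.norm_real, Real.norm_of_nonneg (by positivity), Real.norm_of_nonneg (by positivity)]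
  refine (aux_decay x hx (h * u)).trans ?_
  rw [mul_assoc]
  gcongr
  rw [abs_mul, abs_of_pos hh, Real.rpow_neg (abs_nonneg u)]
  have hu' : 0 < |u| := abs_pos.2 hu
  have h1 := Real.quadratic_le_exp_of_nonneg (mul_pos hh hu').le
  have h2 := mul_pos hh hu'
  rw [Real.exp_neg, inv_le_comm₀ (Real.exp_pos _) (by positivity)]
  have : (2 / h ^ 2 * (|u| ^ (2:ℝ))⁻¹)⁻¹ = (h * |u|) ^ 2 / 2 := by
    rw [Real.rpow_two]; field_simp
  rw [this]; linarith

lemma aux_geom_s15 (r : ℝ) (h0 : 0 ≤ r) (h1 : r < 1) :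
    HasSum (fun n : ℤ => 2 * r ^ n.natAbs) (2 + 4 * r / (1 - r)) := by
  have hg := hasSum_geometric_of_lt_one h0 h1
  have a := hg.mul_left 2
  have b := hg.mul_left (2 * r)
  have := HasSum.of_nat_of_neg_add_one (f := fun n : ℤ => 2 * r ^ n.natAbs)
    (m := 2 * (1-r)⁻¹) (m' := 2 * r * (1-r)⁻¹) (by simpa using a) (by
      have e : (fun n : ℕ => 2 * r ^ (-((n:ℤ) + 1)).natAbs) = fun n : ℕ => 2 * r * r ^ n := by
        funext n
        have : (-((n:ℤ) + 1)).natAbs = n + 1 := by omega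
        rw [this]; ring
      rw [← e] at b
      exact b)
  convert this using 1
  have : 1 - r ≠ 0 := by linarith
  field_simp; ring

lemma aux_poisson (x h : ℝ) (hx : 0 < x) (hh : 0 < h) :
    Summable (fun j : ℤ => Real.exp (j * h) * Real.exp (-x * Real.exp (j * h))) ∧
    |h * ∑' j : ℤ, Real.exp (j * h) * Real.exp (-x * Real.exp (j * h)) - x⁻¹| ≤
      x⁻¹ * (4 * Real.exp (-(π ^ 2 / (2 * h))) / (1 - Real.exp (-(π ^ 2 / (2 * h))))) := by
  set r := Real.exp (-(π ^ 2 / (2 * h))) with hr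
  have hr0 : 0 < r := Real.exp_pos _
  have hr1 : r < 1 := by rw [hr, Real.exp_lt_one_iff]; simp; positivity
  set g : ℝ → ℂ := fun u : ℝ =>
    ((Real.exp (-(h * u)) * Real.exp (-x * Real.exp (-(h * u))) : ℝ) : ℂ) with hg
  have hO := aux_isBigO x h hx hh
  rw [← hg] at hO
  have hsg : Summable (fun n : ℤ => g n) :=
    summable_of_isBigO (Real.summable_abs_int_rpow one_lt_two)
      (hO.comp_tendsto Int.tendsto_coe_cofinite)
  have hsr : Summable (fun j : ℤ => Real.exp (-(h * j)) * Real.exp (-x * Real.exp (-(h * j)))) := by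
    have : Summable (fun j : ℤ =>
      ((Real.exp (-(h * j)) * Real.exp (-x * Real.exp (-(h * j))) : ℝ) : ℂ)) := hsg
    exact_mod_cast this
  have hcomp : ∀ j : ℤ, Real.exp (j * h) * Real.exp (-x * Real.exp (j * h)) =
    (fun j : ℤ => Real.exp (-(h * j)) * Real.exp (-x * Real.exp (-(h * j)))) (Equiv.neg ℤ j) := by
    intro j; simp [mul_comm]
  have hFb : ∀ n : ℤ, ‖𝓕 g n‖ ≤ h⁻¹ * x⁻¹ * (2 * r ^ n.natAbs) := by
    intro n
    have := aux_fourier_norm x h hx hh n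
    rw [← hg] at this
    convert this using 3
    rw [hr, ← Real.exp_nat_mul, Nat.cast_natAbs]
    push_cast
    ring_nf
  have hgeo := aux_geom_s15 r hr0.le hr1
  have hsF : Summable (fun n : ℤ => 𝓕 g n) :=
    Summable.of_norm_bounded (hgeo.summable.mul_left _) hFb
  have hP := Real.tsum_eq_tsum_fourier_of_rpow_decay_of_summable (f := g)
    (by rw [hg]; fun_prop) one_lt_two hO hsF 0
  simp only [zero_add, QuotientAddGroup.mk_zero, fourier_eval_zero, mul_one] at hP
  have hcg : ((∑' j : ℤ, Real.exp (j * h) * Real.exp (-x * Real.exp (j * h)) : ℝ) : ℂ)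
      = ∑' n : ℤ, g n := by
    rw [tsum_congr hcomp, (Equiv.neg ℤ).tsum_eq
      (fun j : ℤ => Real.exp (-(h * j)) * Real.exp (-x * Real.exp (-(h * j)))),
      Complex.ofReal_tsum]
  refine ⟨?_, ?_⟩
  · rw [summable_congr hcomp]
    exact (Equiv.neg ℤ).summable_iff.2 hsr
  · have hF0 : 𝓕 g (0:ℤ) = (h : ℂ)⁻¹ * (x : ℂ)⁻¹ := by
      have := aux_fourier_zero x h hx hh
      rw [← hg] at this; simpa using this
    have hs1 := hsF.tsum_eq_add_tsum_ite 0
    have hs2 := hasSum_ite_sub_hasSum hgeo 0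
    simp only [Int.natAbs_zero, pow_zero, mul_one, add_sub_cancel_left] at hs2
    have hb : ‖∑' n : ℤ, ite (n = 0) 0 (𝓕 g n)‖ ≤ h⁻¹ * x⁻¹ * (4 * r / (1 - r)) := by
      refine tsum_of_norm_bounded (hs2.mul_left (h⁻¹ * x⁻¹)) ?_
      intro n
      by_cases hn : n = 0
      · simp [hn]
      · simpa [hn] using hFb n
    have e : ((h * ∑' j : ℤ, Real.exp (j * h) * Real.exp (-x * Real.exp (j * h)) - x⁻¹ : ℝ) : ℂ)
        = h * ∑' n : ℤ, ite (n = 0) 0 (𝓕 g n) := by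
      rw [Complex.ofReal_sub, Complex.ofReal_mul, hcg, hP, hs1, hF0]
      have : (h : ℂ) ≠ 0 := by exact_mod_cast hh.ne'
      push_cast
      field_simp
      ring
    rw [← Real.norm_eq_abs, ← Complex.norm_real, e, norm_mul, Complex.norm_real,
      Real.norm_of_nonneg hh.le]
    calc _ ≤ h * (h⁻¹ * x⁻¹ * (4 * r / (1 - r))) := by gcongr
      _ = _ := by field_simp

lemma aux_low (x h : ℝ) (hx : 0 < x) (hh : 0 < h) (t : ℝ) :
    h * (Real.exp t * Real.exp (-x * Real.exp t)) ≤ Real.exp (t + h) - Real.exp t := by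
  have h1 : Real.exp (-x * Real.exp t) ≤ 1 := by
    rw [Real.exp_le_one_iff]; have := mul_pos hx (Real.exp_pos t); linarith
  have h2 := Real.add_one_le_exp h
  have h3 := Real.exp_pos t
  rw [Real.exp_add]
  calc h * (Real.exp t * Real.exp (-x * Real.exp t)) ≤ h * (Real.exp t * 1) := by gcongr
    _ ≤ _ := by nlinarith

lemma aux_high (x h : ℝ) (hx : 0 < x) (hh : 0 < h) (t : ℝ) (ht : 1 ≤ x * Real.exp t) :
    h * (Real.exp (t + h) * Real.exp (-x * Real.exp (t + h))) ≤
      x⁻¹ * Real.exp (-x * Real.exp t) - x⁻¹ * Real.exp (-x * Real.exp (t + h)) := by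
  set a := x * Real.exp t with ha
  have hb : -x * Real.exp (t + h) = -(a * Real.exp h) := by rw [Real.exp_add]; ring
  have ha' : -x * Real.exp t = -a := by ring
  rw [hb, ha']
  have e1 : Real.exp (-a) = Real.exp (-(a * Real.exp h)) * Real.exp (a * Real.exp h - a) := by
    rw [← Real.exp_add]; ring_nf
  have e2 : Real.exp (t + h) = x⁻¹ * (a * Real.exp h) := by
    rw [Real.exp_add, ha]; field_simp
  have hE : h + 1 ≤ Real.exp h := Real.add_one_le_exp h
  have hsinh : 2 * h * Real.exp h ≤ Real.exp h ^ 2 - 1 := by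
    have := Real.self_le_sinh_iff.2 hh.le
    rw [Real.sinh_eq] at this
    have e3 : Real.exp (-h) * Real.exp h = 1 := by rw [← Real.exp_add]; simp
    nlinarith [Real.exp_pos h]
  set E := Real.exp h
  have hnn : 0 ≤ a * E - a := by nlinarith
  have hq := Real.quadratic_le_exp_of_nonneg hnn
  have key : h * (a * E) ≤ Real.exp (a * E - a) - 1 := by
    have q1 : a * (E - 1) ^ 2 ≤ (a * E - a) ^ 2 := by
      have : (a * E - a) ^ 2 = a * (a * (E - 1) ^ 2) := by ring
      rw [this]
      have : 0 ≤ a * (E - 1) ^ 2 := by positivity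
      nlinarith
    have q2 : a * (2 * h * E) ≤ a * (E ^ 2 - 1) := by gcongr
    nlinarith
  rw [e1, e2]
  have hp : 0 < x⁻¹ * Real.exp (-(a * E)) := by positivity
  nlinarith [mul_le_mul_of_nonneg_left key hp.le]

lemma aux_trunc (x h : ℝ) (hx : 0 < x) (hh : 0 < h) (A B : ℤ) (hAB : A ≤ B)
    (hB : 1 ≤ x * Real.exp (B * h)) (n : ℕ) :
    h * ∑ j ∈ Finset.Icc (A - n) (B + n), Real.exp (j * h) * Real.exp (-x * Real.exp (j * h)) ≤
    h * ∑ j ∈ Finset.Icc A B, Real.exp (j * h) * Real.exp (-x * Real.exp (j * h))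
      + (Real.exp (A * h) - Real.exp ((A - n) * h))
      + (x⁻¹ * Real.exp (-x * Real.exp (B * h)) - x⁻¹ * Real.exp (-x * Real.exp ((B + n) * h))) := by
  induction n with
  | zero => simp
  | succ n ih =>
    have e : Finset.Icc (A - (n + 1 : ℕ)) (B + (n + 1 : ℕ)) =
        insert (A - (n + 1 : ℕ)) (insert (B + (n + 1 : ℕ)) (Finset.Icc (A - n) (B + n))) := by
      ext j; simp only [Finset.mem_Icc, Finset.mem_insert]; push_cast; omega
    rw [e, Finset.sum_insert, Finset.sum_insert]
    · have l := aux_low x h hx hh ((A - (n + 1)) * h)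
      have u := aux_high x h hx hh ((B + n) * h) (hB.trans (by
        gcongr; simp))
      have e1 : ((A:ℝ) - (n + 1)) * h + h = (A - n) * h := by ring
      have e2 : ((B:ℝ) + n) * h + h = (B + (n + 1)) * h := by ring
      rw [e1] at l
      rw [e2] at u
      push_cast
      linarith
    · simp
    · simp only [Finset.mem_Icc, Finset.mem_insert]; push_cast; omega

lemma aux_trunc_tsum (x h : ℝ) (hx : 0 < x) (hh : 0 < h) (A B : ℤ) (hAB : A ≤ B)
    (hB : 1 ≤ x * Real.exp (B * h))
    (hs : Summable (fun j : ℤ => Real.exp (j * h) * Real.exp (-x * Real.exp (j * h)))) :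
    h * ∑' j : ℤ, Real.exp (j * h) * Real.exp (-x * Real.exp (j * h)) ≤
    h * ∑ j ∈ Finset.Icc A B, Real.exp (j * h) * Real.exp (-x * Real.exp (j * h))
      + Real.exp (A * h) + x⁻¹ * Real.exp (-x * Real.exp (B * h)) := by
  rw [← tsum_mul_left]
  refine (hs.mul_left h).tsum_le_of_sum_le ?_
  intro s
  obtain ⟨n, hn⟩ : ∃ n : ℕ, s ⊆ Finset.Icc (A - n) (B + n) := by
    refine ⟨∑ j ∈ s, (j.natAbs + A.natAbs + B.natAbs), ?_⟩
    intro j hj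
    have := Finset.single_le_sum (f := fun j : ℤ => j.natAbs + A.natAbs + B.natAbs)
      (fun _ _ => Nat.zero_le _) hj
    simp only [Finset.mem_Icc] at this ⊢
    omega
  have h1 := aux_trunc x h hx hh A B hAB hB n
  have h2 : ∑ j ∈ s, h * (Real.exp (j * h) * Real.exp (-x * Real.exp (j * h))) ≤
      ∑ j ∈ Finset.Icc (A - n) (B + n), h * (Real.exp (j * h) * Real.exp (-x * Real.exp (j * h))) :=
    Finset.sum_le_sum_of_subset_of_nonneg hn (fun _ _ _ => by positivity)
  rw [← Finset.mul_sum (Finset.Icc (A - (n:ℤ)) (B + n))] at h2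
  have := Real.exp_pos ((A - n) * h)
  have : 0 < x⁻¹ * Real.exp (-x * Real.exp ((B + n) * h)) := by positivity
  linarith

/-- **Explicit sparse approximation of `x⁻¹` by exponentials (proof of Lemma 2).**
With `N = ⌈(1/2) log (24/ε)⌉`, `h = 2π/(e²(2N+1)²)`, `A = ⌊-(1/h) log (3/ε)⌋`, and
`B = ⌈(1/h) log ((1/δ) log (3/ε))⌉`, for every `x ∈ [δ,1]`,
`|x⁻¹ - h ∑_{j=A}^{B} e^{jh} e^{-x e^{jh}}| ≤ ε x⁻¹`; equivalently,
`(1-ε) x⁻¹ ≤ ∑_{j=A}^{B} h e^{jh} e^{-x e^{jh}} ≤ (1+ε) x⁻¹`. -/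
theorem inverse_approx_truncated_sum (ε δ : ℝ) (hε : ε ∈ Set.Ioc (0 : ℝ) 1)
    (hδ : δ ∈ Set.Ioc (0 : ℝ) 1)
    (N : ℤ) (hN : N = ⌈Real.log (24 / ε) / 2⌉)
    (h : ℝ) (hh : h = 2 * π / (Real.exp 1 ^ 2 * (2 * (N : ℝ) + 1) ^ 2))
    (A : ℤ) (hA : A = ⌊-(1 / h) * Real.log (3 / ε)⌋)
    (B : ℤ) (hB : B = ⌈(1 / h) * Real.log ((1 / δ) * Real.log (3 / ε))⌉)
    (x : ℝ) (hx : x ∈ Set.Icc δ 1) :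
    |x⁻¹ - h * ∑ j ∈ Finset.Icc A B,
        Real.exp (j * h) * Real.exp (-x * Real.exp (j * h))| ≤ ε * x⁻¹ ∧
    (1 - ε) * x⁻¹ ≤ ∑ j ∈ Finset.Icc A B,
        h * Real.exp (j * h) * Real.exp (-x * Real.exp (j * h)) ∧
    ∑ j ∈ Finset.Icc A B,
        h * Real.exp (j * h) * Real.exp (-x * Real.exp (j * h)) ≤ (1 + ε) * x⁻¹ := by
  obtain ⟨hε0, hε1⟩ := hε
  obtain ⟨hδ0, hδ1⟩ := hδ
  obtain ⟨hxδ, hx1⟩ := hx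
  have hx0 : 0 < x := hδ0.trans_le hxδ
  have hlogN : Real.log (24 / ε) ≤ 2 * (N : ℝ) := by
    have := Int.le_ceil (Real.log (24 / ε) / 2)
    rw [← hN] at this; linarith
  have hNpos : 0 < (N : ℝ) := by
    have : 0 < Real.log (24 / ε) := Real.log_pos (by rw [lt_div_iff₀ hε0]; linarith)
    linarith
  have hN1 : (1 : ℝ) ≤ N := by
    have : 0 < N := by exact_mod_cast hNpos
    exact_mod_cast this
  have hh0 : 0 < h := by rw [hh]; positivity
  have hL1 : 1 < Real.log (3 / ε) := by
    rw [Real.lt_log_iff_exp_lt (by positivity)]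
    have := Real.exp_one_lt_d9
    rw [lt_div_iff₀ hε0]
    nlinarith
  have hr : Real.exp (-(π ^ 2 / (2 * h))) ≤ ε / 24 := by
    have e1 : π ^ 2 / (2 * h) = π * (Real.exp 1 ^ 2 * (2 * (N : ℝ) + 1) ^ 2) / 4 := by
      rw [hh]; field_simp; norm_num
    have e2 : 2 * (N : ℝ) ≤ π ^ 2 / (2 * h) := by
      rw [e1]
      have p1 := Real.pi_gt_three
      have p2 : (4:ℝ) ≤ Real.exp 1 ^ 2 := by
        have := Real.exp_one_gt_d9
        nlinarith
      have p3 : (2 * (N : ℝ)) ≤ (2 * (N : ℝ) + 1) ^ 2 := by nlinarith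
      have p4 : 4 * (2 * (N : ℝ)) ≤ Real.exp 1 ^ 2 * (2 * (N : ℝ) + 1) ^ 2 :=
        mul_le_mul p2 p3 (by positivity) (by positivity)
      nlinarith
    calc Real.exp (-(π ^ 2 / (2 * h))) ≤ Real.exp (-Real.log (24 / ε)) :=
          Real.exp_le_exp.2 (by linarith)
      _ = ε / 24 := by rw [Real.exp_neg, Real.exp_log (by positivity), inv_div]
  obtain ⟨hs, hP⟩ := aux_poisson x h hx0 hh0
  have hr0 := Real.exp_pos (-(π ^ 2 / (2 * h)))
  set r := Real.exp (-(π ^ 2 / (2 * h)))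
  have hP2 : 4 * r / (1 - r) ≤ ε / 3 := by
    rw [div_le_iff₀ (by linarith)]
    nlinarith
  have hxi : 0 < x⁻¹ := inv_pos.2 hx0
  have hxi1 : 1 ≤ x⁻¹ := (one_le_inv₀ hx0).2 hx1
  have hP3 := hP.trans (mul_le_mul_of_nonneg_left hP2 hxi.le)
  have hAh : A * h ≤ -Real.log (3 / ε) := by
    have := Int.floor_le (-(1 / h) * Real.log (3 / ε))
    rw [← hA] at this
    calc A * h ≤ (-(1 / h) * Real.log (3 / ε)) * h := by gcongr
      _ = _ := by field_simp
  have hBh : Real.log ((1 / δ) * Real.log (3 / ε)) ≤ B * h := by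
    have := Int.le_ceil ((1 / h) * Real.log ((1 / δ) * Real.log (3 / ε)))
    rw [← hB] at this
    calc _ = ((1 / h) * Real.log ((1 / δ) * Real.log (3 / ε))) * h := by field_simp
      _ ≤ _ := by gcongr
  have hexpB : Real.log (3 / ε) ≤ x * Real.exp (B * h) := by
    have := Real.exp_le_exp.2 hBh
    rw [Real.exp_log (by positivity)] at this
    calc Real.log (3 / ε) = δ * ((1 / δ) * Real.log (3 / ε)) := by field_simp
      _ ≤ x * Real.exp (B * h) := by gcongr
  have hd : 1 ≤ 1 / δ := by rw [le_div_iff₀ hδ0]; linarith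
  have hAB : A ≤ B := by
    have : 0 ≤ Real.log ((1 / δ) * Real.log (3 / ε)) := Real.log_nonneg (by nlinarith)
    have : (A : ℝ) * h ≤ B * h := by linarith
    exact_mod_cast le_of_mul_le_mul_right this hh0
  have hT := aux_trunc_tsum x h hx0 hh0 A B hAB (by linarith) hs
  have hlow : Real.exp (A * h) ≤ ε / 3 * x⁻¹ := by
    calc Real.exp (A * h) ≤ Real.exp (-Real.log (3 / ε)) := Real.exp_le_exp.2 hAh
      _ = ε / 3 := by rw [Real.exp_neg, Real.exp_log (by positivity), inv_div]
      _ ≤ _ := by nlinarith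
  have hup : x⁻¹ * Real.exp (-x * Real.exp (B * h)) ≤ ε / 3 * x⁻¹ := by
    have : Real.exp (-x * Real.exp (B * h)) ≤ ε / 3 := by
      calc _ ≤ Real.exp (-Real.log (3 / ε)) := Real.exp_le_exp.2 (by linarith)
        _ = ε / 3 := by rw [Real.exp_neg, Real.exp_log (by positivity), inv_div]
    nlinarith
  have hle : h * ∑ j ∈ Finset.Icc A B, Real.exp (j * h) * Real.exp (-x * Real.exp (j * h)) ≤
      h * ∑' j : ℤ, Real.exp (j * h) * Real.exp (-x * Real.exp (j * h)) := by
    gcongr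
    exact hs.sum_le_tsum _ (fun _ _ => by positivity)
  rw [abs_le] at hP3
  obtain ⟨hP4, hP5⟩ := hP3
  have hεx : 0 < ε * x⁻¹ := by positivity
  have hsum : ∑ j ∈ Finset.Icc A B, h * Real.exp (j * h) * Real.exp (-x * Real.exp (j * h)) =
      h * ∑ j ∈ Finset.Icc A B, Real.exp (j * h) * Real.exp (-x * Real.exp (j * h)) := by
    rw [Finset.mul_sum]; simp only [mul_assoc]
  rw [hsum, abs_le]
  refine ⟨⟨?_, ?_⟩, ?_, ?_⟩ <;> linarith
end
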